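/- Let 1 ≤ p ≤ 2 and 1 ≤ r, s ≤ ∞. There exists a constant C > 0 such that for every Schwartz function a on ℝ^{2d} and every Schwartz function f on ℝ^d one has ‖a(x,D)f‖_{W(L^r,L^s)} ≤ C · ‖a‖_{M^{p,1}} · ‖f‖_{W(L^r,L^s)}. -/

import Mathlib

open MeasureTheory SchwartzMap Complex ENNReal NNReal

noncomputable section

/-- Mixed `L^p`-type norm of an `ℝ≥0∞`-valued function, with the usual
`essSup` modification when `p = ∞`. -/
def lqNorm {α : Type*} [MeasurableSpace α] (μ : Measure α) (p : ℝ≥0∞)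
    (f : α → ℝ≥0∞) : ℝ≥0∞ :=
  if p = ∞ then essSup f μ else (∫⁻ a, f a ^ p.toReal ∂μ) ^ (1 / p.toReal)

/-- Conjugate exponent in `ℝ≥0∞` : `1/p + 1/p' = 1`, with `1' = ∞`, `∞' = 1`. -/
def dualExp (p : ℝ≥0∞) : ℝ≥0∞ :=
  if p = 1 then ∞ else if p = ∞ then 1 else ENNReal.ofReal (p.toReal / (p.toReal - 1))

/-- `1/p` as a real number, with the convention `1/∞ = 0`. -/
def invR (p : ℝ≥0∞) : ℝ := (p⁻¹).toReal

/-- The Gaussian window `G(t) = exp(-π |t|²)` (as a complex-valued function). -/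
def gaussWin {ι : Type*} [Fintype ι] (t : EuclideanSpace ℝ ι) : ℂ :=
  Complex.exp (-(Real.pi * ‖t‖ ^ 2))

/-- Short-time Fourier transform with Gaussian window:
`V_G F (x, ω) = ∫ F t * conj (G (t - x)) * exp (-2πi ω⬝t) dt`. -/
def STFT {ι : Type*} [Fintype ι] (F : EuclideanSpace ℝ ι → ℂ)
    (x ω : EuclideanSpace ℝ ι) : ℂ :=
  ∫ t, F t * (starRingEnd ℂ) (gaussWin (t - x)) *
    Complex.exp (Complex.I * (-(2 * Real.pi * (inner ℝ ω t : ℝ))))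

/-- Modulation space norm `M^{p,q}`. -/
def modNorm {ι : Type*} [Fintype ι] (p q : ℝ≥0∞)
    (F : EuclideanSpace ℝ ι → ℂ) : ℝ≥0∞ :=
  lqNorm volume q fun ω => lqNorm volume p fun x => (‖STFT F x ω‖₊ : ℝ≥0∞)

/-- Wiener amalgam norm `W(𝓕 L^p, L^q)` (local component Fourier–Lebesgue). -/
def wFLNorm {ι : Type*} [Fintype ι] (p q : ℝ≥0∞)
    (F : EuclideanSpace ℝ ι → ℂ) : ℝ≥0∞ :=
  lqNorm volume q fun x => lqNorm volume p fun ω => (‖STFT F x ω‖₊ : ℝ≥0∞)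

/-- The unit cube `[0,1)^d`. -/
def unitCube (d : ℕ) : Set (EuclideanSpace ℝ (Fin d)) :=
  {x | ∀ i, x i ∈ Set.Ico (0 : ℝ) 1}

/-- Wiener amalgam norm
`‖f‖_{W(L^r,L^s)} = ( Σ_{n ∈ ℤ^d} ( ∫_{[0,1)^d} |f(x+n)|^r dx )^{s/r} )^{1/s}`. -/
def wNorm (d : ℕ) (r s : ℝ≥0∞) (f : EuclideanSpace ℝ (Fin d) → ℂ) : ℝ≥0∞ :=
  lqNorm (Measure.count : Measure (Fin d → ℤ)) s fun n =>
    lqNorm (volume.restrict (unitCube d)) r fun x =>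
      (‖f (x + show EuclideanSpace ℝ (Fin d) from WithLp.toLp 2 fun i => (n i : ℝ))‖₊ : ℝ≥0∞)

/-- Pairing `(x, ω) ∈ ℝ^d × ℝ^d ↦ ℝ^{2d}`. -/
def pairE {d : ℕ} (x ω : EuclideanSpace ℝ (Fin d)) :
    EuclideanSpace ℝ (Fin d ⊕ Fin d) :=
  WithLp.toLp 2 fun i => Sum.elim (fun j => x j) (fun j => ω j) i

/-- First (space) component of a point of `ℝ^{2d}`. -/
def xpart {d : ℕ} (z : EuclideanSpace ℝ (Fin d ⊕ Fin d)) :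
    EuclideanSpace ℝ (Fin d) := WithLp.toLp 2 fun i => z (Sum.inl i)

/-- Second (frequency) component of a point of `ℝ^{2d}`. -/
def wpart {d : ℕ} (z : EuclideanSpace ℝ (Fin d ⊕ Fin d)) :
    EuclideanSpace ℝ (Fin d) := WithLp.toLp 2 fun i => z (Sum.inr i)

/-- Fourier transform `f̂(ω) = ∫ f t e^{-2πi t⬝ω} dt`. -/
def fTrans {ι : Type*} [Fintype ι] (f : EuclideanSpace ℝ ι → ℂ)
    (ω : EuclideanSpace ℝ ι) : ℂ :=
  ∫ t, f t * Complex.exp (Complex.I * (-(2 * Real.pi * (inner ℝ t ω : ℝ))))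

/-- Kohn–Nirenberg operator `a(x,D) f (x) = ∫ a(x,ω) f̂(ω) e^{2πi x⬝ω} dω`. -/
def KNop {d : ℕ} (a : EuclideanSpace ℝ (Fin d ⊕ Fin d) → ℂ)
    (f : EuclideanSpace ℝ (Fin d) → ℂ) (x : EuclideanSpace ℝ (Fin d)) : ℂ :=
  ∫ ω, a (pairE x ω) * fTrans f ω *
    Complex.exp (Complex.I * (2 * Real.pi * (inner ℝ x ω : ℝ)))

/-- Weyl operator `L_σ f (x) = ∫∫ e^{2πi (x-y)⬝ω} σ((x+y)/2, ω) f(y) dy dω`. -/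
def weylOp {d : ℕ} (σ : EuclideanSpace ℝ (Fin d ⊕ Fin d) → ℂ)
    (f : EuclideanSpace ℝ (Fin d) → ℂ) (x : EuclideanSpace ℝ (Fin d)) : ℂ :=
  ∫ y, ∫ ω, Complex.exp (Complex.I * (2 * Real.pi * (inner ℝ (x - y) ω : ℝ))) *
    σ (pairE ((2 : ℝ)⁻¹ • (x + y)) ω) * f y

/-- Cross-Wigner distribution
`W(g,f)(x,ω) = ∫ g(x+t/2) conj(f(x−t/2)) e^{−2πi ω⬝t} dt`. -/
def wigner {d : ℕ} (g f : EuclideanSpace ℝ (Fin d) → ℂ)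
    (z : EuclideanSpace ℝ (Fin d ⊕ Fin d)) : ℂ :=
  ∫ t, g (xpart z + (2 : ℝ)⁻¹ • t) * (starRingEnd ℂ) (f (xpart z - (2 : ℝ)⁻¹ • t)) *
    Complex.exp (Complex.I * (-(2 * Real.pi * (inner ℝ (wpart z) t : ℝ))))

end

open MeasureTheory SchwartzMap Complex ENNReal NNReal

theorem kn_jensen {α : Type*} [MeasurableSpace α] {μ : Measure α} {f g : α → ℝ≥0∞}
    (hf : AEMeasurable f μ) (hg : AEMeasurable g μ) {p : ℝ} (hp : 1 ≤ p) :
    ∫⁻ a, f a * g a ∂μ ≤ (∫⁻ a, g a ∂μ) ^ (1 - 1/p) * (∫⁻ a, f a ^ p * g a ∂μ) ^ (1/p) := by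
  have hp0 : 0 < p := by linarith
  have h1 : 0 ≤ 1 / p := by positivity
  have h2 : 0 ≤ 1 - 1/p := by
    have : 1 / p ≤ 1 := by rw [div_le_one hp0]; exact hp
    linarith
  have := ENNReal.lintegral_mul_norm_pow_le (μ := μ) (f := g) (g := fun a => f a ^ p * g a) hg
    ((hf.pow_const p).mul hg) h2 h1 (by ring)
  refine le_trans (le_of_eq ?_) this
  refine lintegral_congr fun a => ?_
  rw [ENNReal.mul_rpow_of_nonneg _ _ h1, ← ENNReal.rpow_mul, mul_one_div_cancel hp0.ne',
    ENNReal.rpow_one, mul_left_comm, ← ENNReal.rpow_add_of_nonneg _ _ h2 h1]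
  simp

theorem kn_jensen' {α : Type*} [MeasurableSpace α] {μ : Measure α} {f g : α → ℝ≥0∞}
    (hf : AEMeasurable f μ) (hg : AEMeasurable g μ) {p : ℝ} (hp : 1 ≤ p) :
    (∫⁻ a, f a * g a ∂μ) ^ p ≤ (∫⁻ a, g a ∂μ) ^ (p - 1) * (∫⁻ a, f a ^ p * g a ∂μ) := by
  have hp0 : 0 < p := by linarith
  refine (ENNReal.rpow_le_rpow (kn_jensen hf hg hp) hp0.le).trans (le_of_eq ?_)
  rw [ENNReal.mul_rpow_of_nonneg _ _ hp0.le, ← ENNReal.rpow_mul, ← ENNReal.rpow_mul,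
    one_div_mul_cancel hp0.ne', ENNReal.rpow_one, sub_mul, one_div_mul_cancel hp0.ne', one_mul]

theorem kn_minkowski {α β : Type*} [MeasurableSpace α] [MeasurableSpace β] {μ : Measure α}
    {ν : Measure β} [SFinite μ] [SFinite ν] {K : α → β → ℝ≥0∞}
    (hK : Measurable (Function.uncurry K)) {p : ℝ} (hp : 1 ≤ p) :
    (∫⁻ x, (∫⁻ y, K x y ∂ν) ^ p ∂μ) ^ (1/p) ≤ ∫⁻ y, (∫⁻ x, K x y ^ p ∂μ) ^ (1/p) ∂ν := by
  have hp0 : 0 < p := by linarith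
  set w : β → ℝ≥0∞ := fun y => (∫⁻ x, K x y ^ p ∂μ) ^ (1/p) with hw
  have hKp : Measurable (fun z : β × α => K z.2 z.1 ^ p) :=
    (hK.comp measurable_swap).pow_const p
  have hwm : Measurable w := (hKp.lintegral_prod_right').pow_const _
  have hwp : ∀ y, w y ^ p = ∫⁻ x, K x y ^ p ∂μ := fun y => by
    simp only [hw]
    rw [← ENNReal.rpow_mul, one_div_mul_cancel hp0.ne', ENNReal.rpow_one]
  set M := ∫⁻ y, w y ∂ν with hM
  by_cases hMt : M = ∞
  · rw [hMt]; exact le_top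
  have hwfin : ∀ᵐ y ∂ν, w y < ∞ := ae_lt_top hwm hMt
  have hKw : ∀ᵐ x ∂μ, ∀ᵐ y ∂ν, K x y ≤ K x y / w y * w y := by
    have hmeas : MeasurableSet {z : β × α | w z.1 = 0 → K z.2 z.1 = 0} := by
      have h1 : MeasurableSet {z : β × α | w z.1 = 0} :=
        (hwm.comp measurable_fst) (measurableSet_singleton 0)
      have h2 : MeasurableSet {z : β × α | K z.2 z.1 = 0} :=
        (hK.comp measurable_swap) (measurableSet_singleton 0)
      have : {z : β × α | w z.1 = 0 → K z.2 z.1 = 0} = {z : β × α | w z.1 = 0}ᶜ ∪ {z : β × α | K z.2 z.1 = 0} := by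
        ext z; simp [imp_iff_not_or]
      rw [this]; exact h1.compl.union h2
    have h0 : ∀ y, ∀ᵐ x ∂μ, w y = 0 → K x y = 0 := by
      intro y
      by_cases h : w y = 0
      · have h3 : ∫⁻ x, K x y ^ p ∂μ = 0 := by rw [← hwp, h, ENNReal.zero_rpow_of_pos hp0]
        rw [lintegral_eq_zero_iff ((hK.of_uncurry_right).pow_const p)] at h3
        filter_upwards [h3] with x hx _
        simpa [hp0, hp0.le, not_lt.2 hp0.le] using hx
      · exact Filter.Eventually.of_forall fun x hx => absurd hx h
    have h4 : ∀ᵐ z ∂(ν.prod μ), w z.1 = 0 → K z.2 z.1 = 0 := by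
      rw [Measure.ae_prod_iff_ae_ae hmeas]
      exact Filter.Eventually.of_forall h0
    have h5 : ∀ᵐ x ∂μ, ∀ᵐ y ∂ν, w y = 0 → K x y = 0 := by
      rw [← Measure.prod_swap] at h4
      have := Measure.ae_ae_of_ae_prod (ae_of_ae_map measurable_swap.aemeasurable h4)
      simpa using this
    filter_upwards [h5] with x hx
    filter_upwards [hx, hwfin] with y hy hy2
    by_cases h : w y = 0
    · rw [hy h]; exact zero_le
    · rw [ENNReal.div_mul_cancel h hy2.ne]
  have key : ∫⁻ x, (∫⁻ y, K x y ∂ν) ^ p ∂μ ≤ M ^ p := by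
    calc ∫⁻ x, (∫⁻ y, K x y ∂ν) ^ p ∂μ
        ≤ ∫⁻ x, M ^ (p-1) * (∫⁻ y, (K x y / w y) ^ p * w y ∂ν) ∂μ := by
          refine lintegral_mono_ae ?_
          filter_upwards [hKw] with x hx
          refine (ENNReal.rpow_le_rpow (lintegral_mono_ae hx) hp0.le).trans ?_
          exact kn_jensen' ((hK.of_uncurry_left.div hwm).aemeasurable) hwm.aemeasurable hp
      _ = M ^ (p-1) * ∫⁻ y, ∫⁻ x, (K x y / w y) ^ p * w y ∂μ ∂ν := by
          have hm : Measurable (fun z : α × β => (K z.1 z.2 / w z.2) ^ p * w z.2) :=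
            ((hK.div (hwm.comp measurable_snd)).pow_const p).mul (hwm.comp measurable_snd)
          rw [lintegral_const_mul _ hm.lintegral_prod_right', lintegral_lintegral_swap hm.aemeasurable]
      _ ≤ M ^ (p-1) * M := by
          gcongr
          refine lintegral_mono_ae ?_
          filter_upwards [hwfin] with y hy
          rw [lintegral_mul_const _ ((hK.of_uncurry_right.div_const _).pow_const p)]
          have : ∀ x, (K x y / w y) ^ p = K x y ^ p * (w y ^ p)⁻¹ := fun x => by
            rw [ENNReal.div_rpow_of_nonneg _ _ hp0.le, div_eq_mul_inv]
          simp_rw [this]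
          rw [lintegral_mul_const _ (hK.of_uncurry_right.pow_const p), ← hwp]
          calc _ ≤ 1 * w y := by gcongr; exact ENNReal.mul_inv_le_one _
            _ = w y := one_mul _
      _ = M ^ p := by
          nth_rw 2 [← ENNReal.rpow_one M]
          rw [← ENNReal.rpow_add_of_nonneg _ _ (by linarith) zero_le_one]; simp
  calc _ ≤ (M ^ p) ^ (1/p) := ENNReal.rpow_le_rpow key (by positivity)
    _ = M := by rw [← ENNReal.rpow_mul, mul_one_div_cancel hp0.ne', ENNReal.rpow_one]


open MeasureTheory SchwartzMap Complex ENNReal NNReal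

/-- lattice vector -/
noncomputable def knLat {d : ℕ} (n : Fin d → ℤ) : EuclideanSpace ℝ (Fin d) := WithLp.toLp 2 fun i => (n i : ℝ)

/-- coordinatewise floor -/
noncomputable def knFl {d : ℕ} (z : EuclideanSpace ℝ (Fin d)) : Fin d → ℤ := fun i => ⌊z i⌋

/-- 0-1 vector -/
noncomputable def knInd {d : ℕ} (e : Fin d → Bool) : Fin d → ℤ := fun i => if e i then 1 else 0

theorem kn_cover {d : ℕ} (x z : EuclideanSpace ℝ (Fin d)) (hx : x ∈ unitCube d) (n : Fin d → ℤ) :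
    ∃ e : Fin d → Bool, x + knLat n + z - knLat (n + knFl z + knInd e) ∈ unitCube d := by
  refine ⟨fun i => decide (1 ≤ x i + Int.fract (z i)), fun i => ?_⟩
  have h := hx i
  have h1 := Int.fract_nonneg (z i)
  have h2 := Int.fract_lt_one (z i)
  have h3 := Int.floor_add_fract (z i)
  simp only [knLat, knFl, knInd, PiLp.add_apply, PiLp.sub_apply, Pi.add_apply, decide_eq_true_eq]
  obtain ⟨h4, h5⟩ := h
  split_ifs with h6
  · push_cast
    constructor <;> linarith
  · push_cast
    push Not at h6
    constructor <;> linarith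

theorem kn_measurableSet_cube (d : ℕ) : MeasurableSet (unitCube d) := by
  have : unitCube d = ⋂ i, (fun x : EuclideanSpace ℝ (Fin d) => x i) ⁻¹' Set.Ico (0:ℝ) 1 := by
    ext x; simp [unitCube]
  rw [this]
  exact MeasurableSet.iInter fun i => measurableSet_Ico.preimage (by fun_prop)

theorem kn_measurable_fl (d : ℕ) : Measurable (knFl (d := d)) := by
  unfold knFl
  refine measurable_pi_iff.2 fun i => ?_
  exact Int.measurable_floor.comp (by fun_prop)

/-- local norm -/
noncomputable def knLoc (d : ℕ) (r : ℝ≥0∞) (f : EuclideanSpace ℝ (Fin d) → ℂ) (n : Fin d → ℤ) : ℝ≥0∞ :=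
  lqNorm (volume.restrict (unitCube d)) r fun x => (‖f (x + knLat n)‖₊ : ℝ≥0∞)

theorem kn_lqNorm_count_shift {d : ℕ} (s : ℝ≥0∞) (F : (Fin d → ℤ) → ℝ≥0∞) (m : Fin d → ℤ) :
    lqNorm (Measure.count : Measure (Fin d → ℤ)) s (fun n => F (n + m)) =
      lqNorm (Measure.count : Measure (Fin d → ℤ)) s F := by
  unfold lqNorm
  split_ifs
  · have h : ∀ G : (Fin d → ℤ) → ℝ≥0∞, essSup G Measure.count = ⨆ n, G n := fun G => by
      simp [essSup_eq_iSup]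
    rw [h, h]
    exact (Equiv.addRight m).iSup_comp (g := F)
  · rw [lintegral_count, lintegral_count]
    congr 1
    exact (Equiv.addRight m).tsum_eq (fun n => F n ^ s.toReal)

theorem kn_rpow_sum {ι : Type*} (t : Finset ι) (F : ι → ℝ≥0∞) {p : ℝ} (hp : 1 ≤ p) :
    (∑ i ∈ t, F i ^ p) ^ (1/p) ≤ ∑ i ∈ t, F i := by
  classical
  have hp0 : 0 < p := by linarith
  induction t using Finset.induction_on with
  | empty => simp [hp0]
  | insert a t ha ih =>
    rw [Finset.sum_insert ha, Finset.sum_insert ha]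
    refine (ENNReal.rpow_add_le_add_rpow _ _ (by positivity) (by rw [div_le_one hp0]; exact hp)).trans ?_
    rw [← ENNReal.rpow_mul, mul_one_div_cancel hp0.ne', ENNReal.rpow_one]
    gcongr

theorem kn_stepA {d : ℕ} {r : ℝ≥0∞} (hr : 1 ≤ r) {H : EuclideanSpace ℝ (Fin d) → ℝ≥0∞}
    (hH : Measurable H) {f g : EuclideanSpace ℝ (Fin d) → ℂ} (hf : Continuous f)
    (hg : ∀ x, (‖g x‖₊ : ℝ≥0∞) ≤ ∫⁻ z, H z * (‖f (x + z)‖₊ : ℝ≥0∞)) (n : Fin d → ℤ) :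
    knLoc d r g n ≤ ∫⁻ z, H z * ∑ e : Fin d → Bool, knLoc d r f (n + knFl z + knInd e) := by
  have hfm : Measurable (fun x => (‖f x‖₊ : ℝ≥0∞)) := by
    have := hf.measurable; fun_prop
  by_cases hrt : r = ∞
  · have h1 : ∀ m, ∀ᵐ y : EuclideanSpace ℝ (Fin d), y - knLat m ∈ unitCube d →
        (‖f y‖₊ : ℝ≥0∞) ≤ knLoc d r f m := by
      intro m
      have h2 : ∀ᵐ x ∂(volume.restrict (unitCube d)), (‖f (x + knLat m)‖₊ : ℝ≥0∞) ≤ knLoc d r f m := by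
        simp only [knLoc, lqNorm, hrt, if_true]
        exact _root_.ae_le_essSup (f := fun x => (‖f (x + knLat m)‖₊ : ℝ≥0∞))
      rw [ae_restrict_iff' (kn_measurableSet_cube d)] at h2
      have h3 := (measurePreserving_sub_right (volume : Measure (EuclideanSpace ℝ (Fin d))) (knLat m)).quasiMeasurePreserving.ae h2
      simpa using h3
    have h4 : ∀ᵐ y : EuclideanSpace ℝ (Fin d), ∀ m, y - knLat m ∈ unitCube d →
        (‖f y‖₊ : ℝ≥0∞) ≤ knLoc d r f m := ae_all_iff.2 h1
    have h5 : ∀ x ∈ unitCube d, (‖g (x + knLat n)‖₊ : ℝ≥0∞) ≤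
        ∫⁻ z, H z * ∑ e : Fin d → Bool, knLoc d r f (n + knFl z + knInd e) := by
      intro x hx
      refine (hg _).trans (lintegral_mono_ae ?_)
      have h6 := (measurePreserving_add_left (volume : Measure (EuclideanSpace ℝ (Fin d))) (x + knLat n)).quasiMeasurePreserving.ae h4
      filter_upwards [h6] with z hz
      obtain ⟨e, he⟩ := kn_cover x z hx n
      refine mul_le_mul_right ((hz _ he).trans ?_) _
      exact Finset.single_le_sum (f := fun e => knLoc d r f (n + knFl z + knInd e)) (fun _ _ => zero_le) (Finset.mem_univ e)
    rw [knLoc, lqNorm, if_pos hrt]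
    refine essSup_le_of_ae_le _ ?_
    filter_upwards [ae_restrict_mem (kn_measurableSet_cube d)] with x hx using h5 x hx
  · have hr1 : 1 ≤ r.toReal := by
      rw [← ENNReal.toReal_one]; exact ENNReal.toReal_mono hrt hr
    set p := r.toReal
    have hp0 : 0 < p := by linarith
    have hK : Measurable (Function.uncurry fun (x z : EuclideanSpace ℝ (Fin d)) => H z * (‖f (x + knLat n + z)‖₊ : ℝ≥0∞)) := by
      refine (hH.comp measurable_snd).mul (hfm.comp ?_)
      fun_prop
    have hF : ∀ m, knLoc d r f m ^ p = ∫⁻ x in unitCube d, (‖f (x + knLat m)‖₊ : ℝ≥0∞) ^ p := by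
      intro m
      rw [knLoc, lqNorm, if_neg hrt, ← ENNReal.rpow_mul, one_div_mul_cancel hp0.ne', ENNReal.rpow_one]
    rw [knLoc, lqNorm, if_neg hrt]
    calc _ ≤ (∫⁻ x in unitCube d, (∫⁻ z, H z * (‖f (x + knLat n + z)‖₊ : ℝ≥0∞)) ^ p) ^ (1/p) := by
          refine ENNReal.rpow_le_rpow (lintegral_mono fun x => ENNReal.rpow_le_rpow (hg _) hp0.le) (by positivity)
      _ ≤ _ := kn_minkowski hK hr1
      _ ≤ _ := by
          refine lintegral_mono fun z => ?_
          have hm : Measurable fun x => (‖f (x + knLat n + z)‖₊ : ℝ≥0∞) ^ p :=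
            (hfm.comp (by fun_prop)).pow_const p
          simp_rw [ENNReal.mul_rpow_of_nonneg _ _ hp0.le]
          rw [lintegral_const_mul _ hm, ENNReal.mul_rpow_of_nonneg _ _ (by positivity), ← ENNReal.rpow_mul,
            mul_one_div_cancel hp0.ne', ENNReal.rpow_one]
          gcongr
          refine le_trans ?_ (kn_rpow_sum _ _ hr1)
          refine ENNReal.rpow_le_rpow ?_ (by positivity)
          have hQ : ∀ e : Fin d → Bool, knLoc d r f (n + knFl z + knInd e) ^ p =
              ∫⁻ x, (unitCube d).indicator (fun y => (‖f (y + knLat (n + knFl z + knInd e))‖₊ : ℝ≥0∞) ^ p)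
                (x + (knLat n + z - knLat (n + knFl z + knInd e))) := fun e => by
            rw [hF, ← lintegral_indicator (kn_measurableSet_cube d), lintegral_add_right_eq_self]
          simp_rw [hQ]
          rw [← lintegral_finsetSum, ← lintegral_indicator (kn_measurableSet_cube d)]
          · refine lintegral_mono fun x => ?_
            refine Set.indicator_le' (s := unitCube d) (f := fun x => (‖f (x + knLat n + z)‖₊ : ℝ≥0∞) ^ p) (g := fun x => ∑ e : Fin d → Bool, (unitCube d).indicator (fun y => (‖f (y + knLat (n + knFl z + knInd e))‖₊ : ℝ≥0∞) ^ p)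
                (x + (knLat n + z - knLat (n + knFl z + knInd e)))) (fun x hx => ?_) (fun _ _ => zero_le) x
            obtain ⟨e, he⟩ := kn_cover x z hx n
            refine le_trans (le_of_eq ?_) (Finset.single_le_sum (fun _ _ => zero_le) (Finset.mem_univ e))
            rw [Set.indicator_of_mem]
            · congr 4; abel
            · convert he using 1; abel
          · intro e _
            refine Measurable.comp (g := (unitCube d).indicator (fun y => (‖f (y + knLat (n + knFl z + knInd e))‖₊ : ℝ≥0∞) ^ p)) ?_ (by fun_prop)
            exact ((hfm.comp (by fun_prop)).pow_const p).indicator (kn_measurableSet_cube d)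

theorem kn_amalgam {d : ℕ} {r s : ℝ≥0∞} (hr : 1 ≤ r) (hs : 1 ≤ s)
    {H : EuclideanSpace ℝ (Fin d) → ℝ≥0∞}
    (hH : Measurable H) {f g : EuclideanSpace ℝ (Fin d) → ℂ} (hf : Continuous f)
    (hg : ∀ x, (‖g x‖₊ : ℝ≥0∞) ≤ ∫⁻ z, H z * (‖f (x + z)‖₊ : ℝ≥0∞)) :
    wNorm d r s g ≤ 2 ^ d * (∫⁻ z, H z) * wNorm d r s f := by
  have hA := fun n => kn_stepA (n := n) hr hH hf hg
  have hw : ∀ f, wNorm d r s f = lqNorm Measure.count s (knLoc d r f) := fun f => rfl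
  rw [hw, hw]
  set F := knLoc d r f
  set N := lqNorm Measure.count s F with hN
  have hcard : ∀ c : ℝ≥0∞, ∑ e : Fin d → Bool, c = 2 ^ d * c := by
    intro c; simp
  by_cases hst : s = ∞
  · rw [lqNorm, if_pos hst]
    have h : ∀ G : (Fin d → ℤ) → ℝ≥0∞, essSup G Measure.count = ⨆ n, G n := fun G => by
      simp [essSup_eq_iSup]
    rw [h]
    have hFN : ∀ m, F m ≤ N := fun m => by
      rw [hN, lqNorm, if_pos hst, h]; exact le_iSup F m
    refine iSup_le fun n => (hA n).trans ?_
    calc _ ≤ ∫⁻ z, H z * (2 ^ d * N) := by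
          refine lintegral_mono fun z => ?_
          rw [← hcard]
          gcongr with e
          exact hFN _
      _ = _ := by rw [lintegral_mul_const _ hH]; ring
  · have hs1 : 1 ≤ s.toReal := by
      rw [← ENNReal.toReal_one]; exact ENNReal.toReal_mono hst hs
    rw [lqNorm, if_neg hst]
    set p := s.toReal with hp
    have hp0 : 0 < p := by linarith
    have hFm : Measurable F := measurable_of_countable _
    have hK : Measurable (Function.uncurry fun (n : Fin d → ℤ) (q : EuclideanSpace ℝ (Fin d) × (Fin d → Bool)) =>
        H q.1 * F (n + knFl q.1 + knInd q.2)) := by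
      refine (hH.comp (measurable_fst.comp measurable_snd)).mul (hFm.comp ?_)
      refine Measurable.add (measurable_fst.add ((kn_measurable_fl d).comp (measurable_fst.comp measurable_snd))) ?_
      exact (measurable_of_countable (knInd (d := d))).comp (measurable_snd.comp measurable_snd)
    calc _ ≤ (∫⁻ n, (∫⁻ q : EuclideanSpace ℝ (Fin d) × (Fin d → Bool), H q.1 * F (n + knFl q.1 + knInd q.2) ∂((volume : Measure (EuclideanSpace ℝ (Fin d))).prod Measure.count)) ^ p ∂Measure.count) ^ (1/p) := by
          refine ENNReal.rpow_le_rpow (lintegral_mono fun n => ENNReal.rpow_le_rpow ?_ hp0.le) (by positivity)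
          refine (hA n).trans (le_of_eq ?_)
          rw [lintegral_prod _ (hK.of_uncurry_left).aemeasurable]
          refine lintegral_congr fun z => ?_
          rw [lintegral_count, tsum_fintype, Finset.mul_sum]
      _ ≤ _ := kn_minkowski hK hs1
      _ = ∫⁻ q : EuclideanSpace ℝ (Fin d) × (Fin d → Bool), H q.1 * N ∂((volume : Measure (EuclideanSpace ℝ (Fin d))).prod Measure.count) := by
          refine lintegral_congr fun q => ?_
          simp_rw [ENNReal.mul_rpow_of_nonneg _ _ hp0.le]
          rw [lintegral_const_mul _ (measurable_of_countable _), ENNReal.mul_rpow_of_nonneg _ _ (by positivity), ← ENNReal.rpow_mul,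
            mul_one_div_cancel hp0.ne', ENNReal.rpow_one]
          congr 1
          rw [hN, ← kn_lqNorm_count_shift s F (knFl q.1 + knInd q.2), lqNorm, if_neg hst]
          simp_rw [add_assoc]; rfl
      _ = _ := by
          rw [lintegral_prod _ (by fun_prop)]
          simp only [lintegral_const]
          rw [lintegral_mul_const _ (hH.mul_const _), lintegral_mul_const _ hH]
          have : (Measure.count (Set.univ : Set (Fin d → Bool))) = (2:ℝ≥0∞) ^ d := by
            simp [Measure.count_apply]
          rw [this]; ring


open MeasureTheory SchwartzMap Complex ENNReal NNReal
open scoped FourierTransform Convolution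

section knFourier
variable {ι : Type*} [Fintype ι]

theorem kn_gauss_real (t : EuclideanSpace ℝ ι) :
    gaussWin t = ((Real.exp (-(Real.pi * ‖t‖ ^ 2)) : ℝ) : ℂ) := by
  simp [gaussWin]

theorem kn_gauss_conj (t : EuclideanSpace ℝ ι) : (starRingEnd ℂ) (gaussWin t) = gaussWin t := by
  rw [kn_gauss_real, Complex.conj_ofReal]

theorem kn_gauss_neg (t : EuclideanSpace ℝ ι) : gaussWin (-t) = gaussWin t := by
  simp [gaussWin]

theorem kn_gauss_sub (t x : EuclideanSpace ℝ ι) : gaussWin (t - x) = gaussWin (x - t) := by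
  rw [← kn_gauss_neg, neg_sub]

theorem kn_gauss_norm (t : EuclideanSpace ℝ ι) :
    ‖gaussWin t‖ = Real.exp (-(Real.pi * ‖t‖ ^ 2)) := by
  rw [kn_gauss_real, Complex.norm_real, Real.norm_eq_abs, abs_of_pos (Real.exp_pos _)]

theorem kn_gauss_norm_le (t : EuclideanSpace ℝ ι) : ‖gaussWin t‖ ≤ 1 := by
  rw [kn_gauss_norm, Real.exp_le_one_iff]
  have := Real.pi_pos
  have : 0 ≤ Real.pi * ‖t‖ ^ 2 := by positivity
  linarith

theorem kn_gauss_enorm_le (t : EuclideanSpace ℝ ι) : ‖gaussWin t‖ₑ ≤ 1 := by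
  rw [← ofReal_norm]
  exact ENNReal.ofReal_le_one.2 (kn_gauss_norm_le t)

theorem kn_gauss_cont : Continuous (gaussWin : EuclideanSpace ℝ ι → ℂ) := by
  unfold gaussWin; fun_prop

theorem kn_gauss_integrable : Integrable (gaussWin : EuclideanSpace ℝ ι → ℂ) := by
  have := GaussianFourier.integrable_cexp_neg_mul_sq_norm_add (V := EuclideanSpace ℝ ι)
    (b := Real.pi) (by simpa using Real.pi_pos) 0 0
  refine this.congr (Filter.Eventually.of_forall fun t => ?_)
  simp [gaussWin]

theorem kn_gauss_fourier (w : EuclideanSpace ℝ ι) :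
    𝓕 (gaussWin : EuclideanSpace ℝ ι → ℂ) w = gaussWin w := by
  have := fourier_gaussian_innerProductSpace (V := EuclideanSpace ℝ ι)
    (b := Real.pi) (by simpa using Real.pi_pos) w
  have hp : (Real.pi : ℂ) ≠ 0 := by exact_mod_cast Real.pi_ne_zero
  have h2 : (gaussWin : EuclideanSpace ℝ ι → ℂ) = fun v => cexp (-Real.pi * ‖v‖ ^ 2) := by
    ext t; simp [gaussWin]
  rw [h2, this, div_self hp, Complex.one_cpow, one_mul]
  congr 1
  field_simp

theorem kn_fTrans_eq (f : EuclideanSpace ℝ ι → ℂ) : fTrans f = 𝓕 f := by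
  ext w
  rw [Real.fourier_eq', fTrans]
  congr 1; ext t
  rw [smul_eq_mul, mul_comm]
  congr 2
  push_cast; ring

theorem kn_stft_eq (F : EuclideanSpace ℝ ι → ℂ) (x : EuclideanSpace ℝ ι) :
    STFT F x = 𝓕 (fun t => F t * gaussWin (t - x)) := by
  ext w
  rw [Real.fourier_eq', STFT]
  congr 1; ext t
  rw [smul_eq_mul, mul_comm, kn_gauss_conj, real_inner_comm]
  congr 2
  push_cast; ring

theorem kn_mul_gauss_integrable {F : EuclideanSpace ℝ ι → ℂ} (hF : Integrable F)
    (x : EuclideanSpace ℝ ι) : Integrable (fun t => F t * gaussWin (t - x)) := by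
  refine hF.mul_bdd (c := 1) (kn_gauss_cont.comp (by fun_prop)).aestronglyMeasurable ?_
  exact Filter.Eventually.of_forall fun t => kn_gauss_norm_le _

theorem kn_stft_cont {F : EuclideanSpace ℝ ι → ℂ} (hF : Integrable F) :
    Continuous (fun q : EuclideanSpace ℝ ι × EuclideanSpace ℝ ι => STFT F q.1 q.2) := by
  simp_rw [kn_stft_eq, Real.fourier_eq]
  refine continuous_of_dominated (bound := fun t => ‖F t‖) ?_ ?_ hF.norm ?_
  · intro q
    exact ((Real.fourierIntegral_convergent_iff q.2).2 (kn_mul_gauss_integrable hF q.1)).1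
  · intro q
    filter_upwards with t
    rw [Circle.norm_smul, norm_mul]
    exact mul_le_of_le_one_right (norm_nonneg _) (kn_gauss_norm_le _)
  · filter_upwards with t
    have := kn_gauss_cont (ι := ι)
    fun_prop

theorem kn_fourier_cont {F : EuclideanSpace ℝ ι → ℂ} (hF : Integrable F) : Continuous (𝓕 F) :=
  VectorFourier.fourierIntegral_continuous Real.continuous_fourierChar
    (L := innerₗ (EuclideanSpace ℝ ι)) continuous_inner hF

theorem kn_fourier_mod (F : EuclideanSpace ℝ ι → ℂ) (η w : EuclideanSpace ℝ ι) :
    𝓕 (fun t => Real.fourierChar (-inner ℝ t η) • F t) w = 𝓕 F (w + η) := by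
  rw [Real.fourier_eq, Real.fourier_eq]
  congr 1; ext t
  rw [smul_smul, ← AddChar.map_add_eq_mul, inner_add_right]
  congr 2; ring

theorem kn_fourier_norm_le (F : EuclideanSpace ℝ ι → ℂ) (w : EuclideanSpace ℝ ι) :
    ‖𝓕 F w‖ ≤ ∫ t, ‖F t‖ :=
  VectorFourier.norm_fourierIntegral_le_integral_norm _ _ _ _ _

theorem kn_flip {f g : EuclideanSpace ℝ ι → ℂ} (hf : Integrable f) (hg : Integrable g) :
    ∫ w, 𝓕 f w * g w = ∫ x, f x * 𝓕 g x := by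
  have := VectorFourier.integral_fourierIntegral_smul_eq_flip (L := innerₗ (EuclideanSpace ℝ ι))
    (e := Real.fourierChar) (μ := volume) (ν := volume)
    Real.continuous_fourierChar continuous_inner hf hg
  simpa using! this

theorem kn_inv_bound {φ : EuclideanSpace ℝ ι → ℂ} (hc : Continuous φ) (hi : Integrable φ)
    (u : EuclideanSpace ℝ ι) : ‖φ u‖ₑ ≤ ∫⁻ w, ‖𝓕 φ w‖ₑ := by
  by_cases h : ∫⁻ w, ‖𝓕 φ w‖ₑ = ∞
  · rw [h]; exact le_top
  have hint : Integrable (𝓕 φ) := ⟨(kn_fourier_cont hi).aestronglyMeasurable, lt_top_iff_ne_top.2 h⟩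
  have h1 := congrFun (hc.fourierInv_fourier_eq hi hint) u
  rw [← h1, Real.fourierInv_eq]
  refine (enorm_integral_le_lintegral_enorm _).trans (le_of_eq ?_)
  refine lintegral_congr fun w => ?_
  rw [← ofReal_norm, Circle.norm_smul, ofReal_norm]

theorem kn_plancherel {f : EuclideanSpace ℝ ι → ℂ} (hc : Continuous f) (hi : Integrable f)
    (hF : Integrable (𝓕 f)) : ∫⁻ w, ‖𝓕 f w‖ₑ ^ (2:ℝ) = ∫⁻ x, ‖f x‖ₑ ^ (2:ℝ) := by
  have hb : ∀ w, ‖𝓕 f w‖ ≤ ∫ t, ‖f t‖ := kn_fourier_norm_le f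
  have hinv : 𝓕⁻ (𝓕 f) = f := hc.fourierInv_fourier_eq hi hF
  have hb' : ∀ x, ‖f x‖ ≤ ∫ w, ‖𝓕 f w‖ := by
    intro x
    rw [← congrFun hinv x, Real.fourierInv_eq]
    refine (norm_integral_le_integral_norm _).trans (le_of_eq ?_)
    simp_rw [Circle.norm_smul]
  have hconj : ∀ x, 𝓕 (fun w => (starRingEnd ℂ) (𝓕 f w)) x = (starRingEnd ℂ) (f x) := by
    intro x
    conv_rhs => rw [← congrFun hinv x]
    rw [Real.fourierInv_eq, Real.fourier_eq, ← integral_conj]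
    congr 1; ext w
    rw [Circle.smul_def, Circle.smul_def, smul_eq_mul, smul_eq_mul, map_mul, AddChar.map_neg_eq_inv,
      Circle.coe_inv_eq_conj]
  have hcF : Integrable (fun w => (starRingEnd ℂ) (𝓕 f w)) := by
    exact (Complex.conjCLE : ℂ →L[ℝ] ℂ).integrable_comp hF
  have key := kn_flip hi hcF
  simp_rw [hconj, Complex.mul_conj, Complex.normSq_eq_norm_sq] at key
  rw [integral_complex_ofReal, integral_complex_ofReal, Complex.ofReal_inj] at key
  have hsq : ∀ g : EuclideanSpace ℝ ι → ℂ, ∀ M : ℝ, Integrable g → (∀ x, ‖g x‖ ≤ M) →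
      ∫⁻ x, ‖g x‖ₑ ^ (2:ℝ) = ENNReal.ofReal (∫ x, ‖g x‖ ^ 2) := by
    intro g M hg hM
    rw [ofReal_integral_eq_lintegral_ofReal]
    · refine lintegral_congr fun x => ?_
      rw [← ofReal_norm, ENNReal.ofReal_rpow_of_nonneg (norm_nonneg _) (by norm_num)]
      norm_num
    · have := hg.norm.mul_bdd (g := fun x => ‖g x‖) (c := M) hg.1.norm (Filter.Eventually.of_forall fun x => by simpa using hM x)
      simpa [pow_two] using this
    · exact Filter.Eventually.of_forall fun x => by positivity
  rw [hsq _ _ hF hb, hsq _ _ hi hb', key]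

theorem kn_stft_conv (A : EuclideanSpace ℝ ι → ℂ) (η : EuclideanSpace ℝ ι) :
    (fun x => STFT A x η) = ((fun t => Real.fourierChar (-inner ℝ t η) • A t) ⋆[ContinuousLinearMap.mul ℂ ℂ] gaussWin) := by
  ext x
  rw [kn_stft_eq, Real.fourier_eq, convolution_def]
  congr 1; ext t
  rw [ContinuousLinearMap.mul_apply', smul_mul_assoc, kn_gauss_sub]

theorem kn_stft_conv_int {A : EuclideanSpace ℝ ι → ℂ} (hA : Integrable A) (η : EuclideanSpace ℝ ι) :
    Integrable (fun x => STFT A x η) := by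
  rw [kn_stft_conv]
  exact Integrable.integrable_convolution _ ((Real.fourierIntegral_convergent_iff η).2 hA) kn_gauss_integrable

theorem kn_stft_conv_fourier {A : EuclideanSpace ℝ ι → ℂ} (hA : Integrable A) (η ζ : EuclideanSpace ℝ ι) :
    𝓕 (fun x => STFT A x η) ζ = 𝓕 A (ζ + η) * gaussWin ζ := by
  rw [kn_stft_conv, Real.fourier_mul_convolution_eq ((Real.fourierIntegral_convergent_iff η).2 hA) kn_gauss_integrable, kn_gauss_fourier, kn_fourier_mod]

theorem kn_stft_conv_fourier_int {A : EuclideanSpace ℝ ι → ℂ} (hA : Integrable A) (η : EuclideanSpace ℝ ι) :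
    Integrable (𝓕 (fun x => STFT A x η)) := by
  have h : 𝓕 (fun x => STFT A x η) = fun ζ => 𝓕 A (ζ + η) * gaussWin ζ :=
    funext (kn_stft_conv_fourier hA η)
  rw [h]
  refine kn_gauss_integrable.bdd_mul (c := ∫ t, ‖A t‖) ?_ ?_
  · exact ((kn_fourier_cont hA).comp (continuous_add_const η)).aestronglyMeasurable
  · exact Filter.Eventually.of_forall fun ζ => kn_fourier_norm_le _ _

theorem kn_stft_cont_left {A : EuclideanSpace ℝ ι → ℂ} (hA : Integrable A) (η : EuclideanSpace ℝ ι) :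
    Continuous (fun x => STFT A x η) := by
  have h := kn_stft_cont hA
  generalize STFT A = S at h ⊢
  exact h.comp (Continuous.prodMk_left η)

theorem kn_stft_plancherel {A : EuclideanSpace ℝ ι → ℂ} (hA : Integrable A)
    (η : EuclideanSpace ℝ ι) :
    ∫⁻ ζ, ‖𝓕 A (ζ + η)‖ₑ ^ (2:ℝ) * ‖gaussWin ζ‖ₑ ^ (2:ℝ) = ∫⁻ x, ‖STFT A x η‖ₑ ^ (2:ℝ) := by
  have h := kn_plancherel (kn_stft_cont_left hA η) (kn_stft_conv_int hA η) (kn_stft_conv_fourier_int hA η)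
  refine Eq.trans (lintegral_congr fun ζ => ?_) h
  have h2 : (0:ℝ) ≤ 2 := by norm_num
  rw [kn_stft_conv_fourier hA, enorm_mul, ENNReal.mul_rpow_of_nonneg _ _ h2]

end knFourier


open MeasureTheory SchwartzMap Complex ENNReal NNReal
open scoped FourierTransform Convolution

section knRepro
variable {ι : Type*} [Fintype ι]

/-- wide Gaussian, extended nonnegative -/
noncomputable def knW (t : EuclideanSpace ℝ ι) : ℝ≥0∞ := ENNReal.ofReal (Real.exp (-(Real.pi / 2 * ‖t‖ ^ 2)))

theorem knW_le (t : EuclideanSpace ℝ ι) : knW t ≤ 1 := by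
  refine ENNReal.ofReal_le_one.2 (Real.exp_le_one_iff.2 ?_)
  have := Real.pi_pos
  have : 0 ≤ Real.pi / 2 * ‖t‖ ^ 2 := by positivity
  linarith

theorem knW_meas : Measurable (knW : EuclideanSpace ℝ ι → ℝ≥0∞) := by
  unfold knW; fun_prop

theorem knW_int : ∫⁻ t, (knW t : ℝ≥0∞) ∂(volume : Measure (EuclideanSpace ℝ ι)) ≠ ∞ := by
  have h := GaussianFourier.integrable_cexp_neg_mul_sq_norm_add (V := EuclideanSpace ℝ ι)
    (b := (Real.pi/2 : ℝ)) (by simpa using Real.pi_pos) 0 0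
  refine ne_of_lt (lt_of_le_of_lt (le_of_eq ?_) h.2)
  refine lintegral_congr fun t => ?_
  rw [knW, ← ofReal_norm, Complex.norm_exp]
  congr 2
  have : (-((Real.pi/2 : ℝ):ℂ) * (‖t‖:ℂ)^2 + 0 * (inner ℝ 0 t : ℝ)) = ((-(Real.pi/2 * ‖t‖^2) : ℝ) : ℂ) := by
    push_cast; ring
  rw [this, Complex.ofReal_re]

theorem kn_gauss_prod (x x' t : EuclideanSpace ℝ ι) :
    gaussWin (t - x') * gaussWin (t - x) =
      ((Real.exp (-(Real.pi / 2 * ‖x - x'‖ ^ 2)) : ℝ) : ℂ) *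
        cexp (-(Real.pi:ℂ) ^ 2 * (‖(2⁻¹ : ℝ) • (x + x') - t‖:ℂ) ^ 2 / ((Real.pi / 2 : ℝ) : ℂ)) := by
  have hp : (Real.pi : ℂ) ≠ 0 := by exact_mod_cast Real.pi_ne_zero
  have h := parallelogram_law_with_norm ℝ (t - x') (t - x)
  have e1 : (t - x') + (t - x) = (-2 : ℝ) • ((2⁻¹ : ℝ) • (x + x') - t) := by module
  have e2 : (t - x') - (t - x) = x - x' := by abel
  rw [e1, e2, norm_smul] at h
  generalize (2⁻¹ : ℝ) • (x + x') - t = m at h ⊢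
  norm_num at h
  rw [gaussWin, gaussWin, ← Complex.exp_add, Complex.ofReal_exp, ← Complex.exp_add]
  congr 1
  have h' : (((2 * ‖m‖) ^ 2 + ‖x - x'‖ ^ 2 : ℝ) : ℂ) =
      ((2 * (‖t - x'‖ ^ 2 + ‖t - x‖ ^ 2) : ℝ) : ℂ) := by
    rw [← h]
  push_cast at h' ⊢
  field_simp
  linear_combination h'

theorem kn_repro_inner {F : EuclideanSpace ℝ ι → ℂ} (hF : Integrable F)
    (x x' ω : EuclideanSpace ℝ ι) :
    ‖∫ t, (Real.fourierChar (-inner ℝ t ω) • (F t * gaussWin (t - x))) * gaussWin (x' - t) ^ 2‖ₑ ≤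
      knW (x - x') * ∫⁻ v, ‖STFT F x' (v + ω)‖ₑ * knW v := by
  set n : ℂ := (Module.finrank ℝ (EuclideanSpace ℝ ι) / 2 : ℂ)
  set y := (2⁻¹ : ℝ) • (x + x') with hy
  set φ : EuclideanSpace ℝ ι → ℂ := fun t => Real.fourierChar (-inner ℝ t ω) • (F t * gaussWin (t - x')) with hφ
  set ψ : EuclideanSpace ℝ ι → ℂ := fun v => cexp (-((Real.pi / 2 : ℝ) : ℂ) * ‖v‖ ^ 2 + 2 * Real.pi * Complex.I * (inner ℝ y v : ℝ)) with hψ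
  have hb : 0 < ((Real.pi / 2 : ℝ) : ℂ).re := by simpa using Real.pi_pos
  have hφi : Integrable φ := (Real.fourierIntegral_convergent_iff ω).2 (kn_mul_gauss_integrable hF x')
  have hψi : Integrable ψ := GaussianFourier.integrable_cexp_neg_mul_sq_norm_add hb (2 * Real.pi * Complex.I) y
  have hψF : ∀ t, 𝓕 ψ t = ((Real.pi:ℂ) / ((Real.pi / 2 : ℝ) : ℂ)) ^ n *
      cexp (-(Real.pi:ℂ) ^ 2 * (‖y - t‖:ℂ) ^ 2 / ((Real.pi / 2 : ℝ) : ℂ)) := fun t =>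
    fourier_gaussian_innerProductSpace' hb y t
  have h2 : ((Real.pi:ℂ) / ((Real.pi / 2 : ℝ) : ℂ)) = ((2:ℝ):ℂ) := by
    have hp : (Real.pi : ℂ) ≠ 0 := by exact_mod_cast Real.pi_ne_zero
    push_cast; field_simp
  set κ : ℂ := ((2:ℝ):ℂ) ^ n with hκ
  have hκn : 1 ≤ ‖κ‖ := by
    rw [hκ, Complex.norm_cpow_eq_rpow_re_of_pos (by norm_num)]
    refine Real.one_le_rpow (by norm_num) ?_
    have : n = (((Module.finrank ℝ (EuclideanSpace ℝ ι) : ℝ) / 2 : ℝ) : ℂ) := by simp [n]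
    rw [this, Complex.ofReal_re]; positivity
  set c : ℝ := Real.exp (-(Real.pi / 2 * ‖x - x'‖ ^ 2)) with hc
  have key := kn_flip hφi hψi
  have e1 : ∀ t, κ * ((Real.fourierChar (-inner ℝ t ω) • (F t * gaussWin (t - x))) * gaussWin (x' - t) ^ 2)
      = (c : ℂ) * (φ t * 𝓕 ψ t) := by
    intro t
    have hφt : φ t = (Real.fourierChar (-inner ℝ t ω) : ℂ) * (F t * gaussWin (t - x')) := rfl
    rw [hψF, h2, hφt, kn_gauss_sub x' t, Circle.smul_def, smul_eq_mul]
    have := kn_gauss_prod x x' t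
    rw [← hc, ← hy] at this
    linear_combination (κ * (Real.fourierChar (-inner ℝ t ω) : ℂ) * F t * gaussWin (t - x')) * this
  have e2 : κ * ∫ t, (Real.fourierChar (-inner ℝ t ω) • (F t * gaussWin (t - x))) * gaussWin (x' - t) ^ 2
      = (c : ℂ) * ∫ v, 𝓕 φ v * ψ v := by
    rw [key, ← integral_const_mul, ← integral_const_mul]
    exact integral_congr_ae (Filter.Eventually.of_forall e1)
  have hψn : ∀ v, ‖ψ v‖ₑ = knW v := by
    intro v
    rw [hψ, knW, ← ofReal_norm, Complex.norm_exp]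
    congr 2
    have : (-((Real.pi / 2 : ℝ) : ℂ) * (‖v‖:ℂ) ^ 2 + 2 * Real.pi * Complex.I * (inner ℝ y v : ℝ)) =
      ((-(Real.pi/2 * ‖v‖^2) : ℝ) : ℂ) + ((2 * Real.pi * inner ℝ y v : ℝ) : ℂ) * Complex.I := by
      push_cast; ring
    rw [this]; simp [-Complex.ofReal_mul, -Complex.ofReal_neg]
  calc _ ≤ ‖κ‖ₑ * ‖∫ t, (Real.fourierChar (-inner ℝ t ω) • (F t * gaussWin (t - x))) * gaussWin (x' - t) ^ 2‖ₑ := by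
        refine le_mul_of_one_le_left zero_le ?_
        rw [← ofReal_norm]
        exact ENNReal.one_le_ofReal.2 hκn
    _ = ‖(c:ℂ)‖ₑ * ‖∫ v, 𝓕 φ v * ψ v‖ₑ := by rw [← enorm_mul, e2, enorm_mul]
    _ ≤ _ := by
        have : ‖(c:ℂ)‖ₑ = knW (x - x') := by
          rw [← ofReal_norm, Complex.norm_real, Real.norm_eq_abs, abs_of_pos (Real.exp_pos _)]; rfl
        rw [this]
        gcongr
        refine (enorm_integral_le_lintegral_enorm _).trans (le_of_eq ?_)
        refine lintegral_congr fun v => ?_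
        rw [enorm_mul, hψn, hφ, kn_fourier_mod, kn_stft_eq]

theorem kn_gauss2_int : ∃ c : ℝ, 0 < c ∧ ∫ t : EuclideanSpace ℝ ι, gaussWin t ^ 2 = (c : ℂ) := by
  refine ⟨(Real.pi / (2 * Real.pi)) ^ (Module.finrank ℝ (EuclideanSpace ℝ ι) / 2 : ℝ), ?_, ?_⟩
  · have := Real.pi_pos; positivity
  · rw [← GaussianFourier.integral_rexp_neg_mul_sq_norm (V := EuclideanSpace ℝ ι) (b := 2 * Real.pi) (by have := Real.pi_pos; positivity)]
    rw [← integral_complex_ofReal]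
    congr 1; ext t
    rw [gaussWin, ← Complex.exp_nat_mul, Complex.ofReal_exp]
    congr 1; push_cast; ring

theorem kn_gauss2_integrable : Integrable (fun t : EuclideanSpace ℝ ι => gaussWin t ^ 2) := by
  have := kn_gauss_integrable.mul_bdd (g := (gaussWin : EuclideanSpace ℝ ι → ℂ)) (c := 1) kn_gauss_cont.aestronglyMeasurable (Filter.Eventually.of_forall kn_gauss_norm_le)
  simpa [pow_two] using this

theorem kn_repro : ∃ C : ℝ≥0∞, C ≠ ∞ ∧ ∀ (F : EuclideanSpace ℝ ι → ℂ), Integrable F →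
    ∀ x ω, ‖STFT F x ω‖ₑ ≤ C * ∫⁻ x', knW (x - x') * ∫⁻ v, ‖STFT F x' (v + ω)‖ₑ * knW v := by
  obtain ⟨c, hc, hcI⟩ := kn_gauss2_int (ι := ι)
  refine ⟨(ENNReal.ofReal c)⁻¹, by simp [hc], fun F hF x ω => ?_⟩
  set B : EuclideanSpace ℝ ι → ℂ := fun t => Real.fourierChar (-inner ℝ t ω) • (F t * gaussWin (t - x))
  have hB : Integrable B := (Real.fourierIntegral_convergent_iff ω).2 (kn_mul_gauss_integrable hF x)
  have h1 := integral_convolution (μ := volume) (ν := volume) (ContinuousLinearMap.mul ℂ ℂ) hB (kn_gauss2_integrable (ι := ι))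
  rw [ContinuousLinearMap.mul_apply', hcI] at h1
  have h2 : ∫ t, B t = STFT F x ω := by rw [kn_stft_eq, Real.fourier_eq]
  rw [h2] at h1
  have h3 : ‖STFT F x ω‖ₑ = (ENNReal.ofReal c)⁻¹ * ‖STFT F x ω * (c:ℂ)‖ₑ := by
    have : ‖(c:ℂ)‖ₑ = ENNReal.ofReal c := by
      rw [← ofReal_norm, Complex.norm_real, Real.norm_eq_abs, abs_of_pos hc]
    rw [enorm_mul, this, mul_comm, mul_assoc, ENNReal.mul_inv_cancel (by simpa using hc) ENNReal.ofReal_ne_top, mul_one]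
  rw [h3, ← h1]
  gcongr
  refine (enorm_integral_le_lintegral_enorm _).trans (lintegral_mono fun x' => ?_)
  rw [convolution_def]
  exact kn_repro_inner hF x x' ω

theorem kn_M2_abs {p : ℝ≥0∞} (hp1 : 1 ≤ p) (hp2 : p ≤ 2) {C : ℝ≥0∞} (hC : C ≠ ∞) :
    ∃ C' : ℝ≥0∞, C' ≠ ∞ ∧ ∀ (V : EuclideanSpace ℝ ι → EuclideanSpace ℝ ι → ℝ≥0∞),
      Measurable (fun z : EuclideanSpace ℝ ι × EuclideanSpace ℝ ι => V z.1 z.2) →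
      (∀ x ω, V x ω ≤ C * ∫⁻ x', knW (x - x') * ∫⁻ v, V x' (v + ω) * knW v) →
    ∫⁻ ω, (∫⁻ x, V x ω ^ (2:ℝ)) ^ (1/2 : ℝ) ≤ C' * lqNorm volume 1 fun ω => lqNorm volume p fun x => V x ω := by
  have hpt : p ≠ ∞ := ne_top_of_le_ne_top (by norm_num) hp2
  set q := p.toReal with hq
  have hq1 : 1 ≤ q := by rw [hq, ← ENNReal.toReal_one]; exact ENNReal.toReal_mono hpt hp1
  have hq2 : q ≤ 2 := by simpa using ENNReal.toReal_mono (by norm_num) hp2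
  have hq0 : 0 < q := by linarith
  have hq3 : 0 ≤ 1 - 1/q := by
    have : 1 / q ≤ 1 := by rw [div_le_one hq0]; exact hq1
    linarith
  set I0 : ℝ≥0∞ := ∫⁻ t : EuclideanSpace ℝ ι, knW t with hI0
  have hI : I0 ≠ ∞ := knW_int
  refine ⟨C * I0 ^ (1 - 1/q) * I0 + 1, ?_, fun V hVm hrep => ?_⟩
  · refine ENNReal.add_ne_top.2 ⟨ENNReal.mul_ne_top (ENNReal.mul_ne_top hC ?_) hI, by simp⟩
    exact ENNReal.rpow_ne_top_of_nonneg hq3 hI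
  set P : EuclideanSpace ℝ ι → ℝ≥0∞ := fun ω => (∫⁻ x, V x ω ^ q) ^ (1/q) with hP
  have hVx : ∀ ω, Measurable fun x => V x ω := fun ω => hVm.comp (by fun_prop : Measurable fun x => (x, ω))
  have hPm : Measurable P := by
    refine Measurable.pow_const ?_ _
    exact Measurable.lintegral_prod_left' (f := fun z : EuclideanSpace ℝ ι × EuclideanSpace ℝ ι => V z.1 z.2 ^ q) (hVm.pow_const q)
  have hmod : (lqNorm volume 1 fun ω => lqNorm volume p fun x => V x ω) = ∫⁻ ω, P ω := by
    simp only [lqNorm, hpt, ENNReal.one_ne_top, if_false, ENNReal.toReal_one, ENNReal.rpow_one, div_one, hP, ← hq]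
  set S : EuclideanSpace ℝ ι → ℝ≥0∞ := fun ω => C * I0 ^ (1 - 1/q) * ∫⁻ v, P (v + ω) * knW v with hS
  have hsup : ∀ x ω, V x ω ≤ S ω := by
    intro x ω
    refine (hrep x ω).trans ?_
    have hm : Measurable (fun z : EuclideanSpace ℝ ι × EuclideanSpace ℝ ι => knW (x - z.1) * (V z.1 (z.2 + ω) * knW z.2)) := by
      refine (knW_meas.comp (by fun_prop)).mul (Measurable.mul ?_ (knW_meas.comp measurable_snd))
      exact hVm.comp (by fun_prop : Measurable fun z : EuclideanSpace ℝ ι × EuclideanSpace ℝ ι => (z.1, z.2 + ω))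
    have e1 : ∀ x', knW (x - x') * ∫⁻ v, V x' (v + ω) * knW v = ∫⁻ v, knW (x - x') * (V x' (v + ω) * knW v) := by
      intro x'
      rw [lintegral_const_mul]
      refine Measurable.mul ?_ knW_meas
      exact hVm.comp (by fun_prop : Measurable fun v : EuclideanSpace ℝ ι => (x', v + ω))
    simp_rw [e1]
    rw [lintegral_lintegral_swap hm.aemeasurable]
    simp only [hS]
    rw [mul_assoc]
    gcongr
    rw [← lintegral_const_mul]
    swap
    · exact (hPm.comp (by fun_prop)).mul knW_meas
    refine lintegral_mono fun v => ?_
    have e2 : ∀ x', knW (x - x') * (V x' (v + ω) * knW v) = (V x' (v + ω) * knW (x - x')) * knW v := fun x' => by ring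
    simp_rw [e2]
    have hk : Measurable fun x' => knW (x - x') := knW_meas.comp (by fun_prop)
    have hvk : Measurable fun x' => V x' (v + ω) * knW (x - x') := (hVx (v + ω)).mul hk
    rw [lintegral_mul_const _ hvk, ← mul_assoc]
    gcongr
    refine (kn_jensen (hVx _).aemeasurable hk.aemeasurable hq1).trans ?_
    rw [lintegral_sub_left_eq_self (fun t => knW t) x]
    simp only [hP]
    gcongr with x'
    exact mul_le_of_le_one_right zero_le (knW_le (x - x'))
  have hpt2 : ∀ ω, (∫⁻ x, V x ω ^ (2:ℝ)) ^ (1/2 : ℝ) ≤ S ω + P ω := by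
    intro ω
    set m := S ω + P ω
    have h1 : ∫⁻ x, V x ω ^ (2:ℝ) ≤ m ^ (2 - q) * m ^ q := by
      calc _ ≤ ∫⁻ x, m ^ (2 - q) * V x ω ^ q := by
            refine lintegral_mono fun x => ?_
            have : V x ω ^ (2:ℝ) = V x ω ^ (2 - q) * V x ω ^ q := by
              rw [← ENNReal.rpow_add_of_nonneg _ _ (by linarith) hq0.le]; norm_num
            rw [this]
            gcongr
            exact (hsup x ω).trans le_self_add
        _ = m ^ (2 - q) * P ω ^ q := by
            rw [lintegral_const_mul _ ((hVx ω).pow_const q), hP, ← ENNReal.rpow_mul, one_div_mul_cancel hq0.ne', ENNReal.rpow_one]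
        _ ≤ _ := by gcongr; exact le_add_self
    rw [← ENNReal.rpow_add_of_nonneg _ _ (by linarith) hq0.le] at h1
    refine (ENNReal.rpow_le_rpow h1 (by norm_num)).trans (le_of_eq ?_)
    rw [← ENNReal.rpow_mul]; norm_num
  calc _ ≤ ∫⁻ ω, S ω + P ω := lintegral_mono hpt2
    _ = (∫⁻ ω, S ω) + ∫⁻ ω, P ω := lintegral_add_right _ hPm
    _ = _ := by
      have hm : Measurable (fun z : EuclideanSpace ℝ ι × EuclideanSpace ℝ ι => P (z.2 + z.1) * knW z.2) :=
        (hPm.comp (by fun_prop)).mul (knW_meas.comp measurable_snd)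
      rw [hS, lintegral_const_mul _ hm.lintegral_prod_right', lintegral_lintegral_swap hm.aemeasurable, hmod]
      have : ∀ v, ∫⁻ ω, P (v + ω) * knW v = (∫⁻ ω, P ω) * knW v := fun v => by
        have hPv : Measurable fun ω => P (v + ω) := hPm.comp (by fun_prop : Measurable fun ω => v + ω)
        rw [lintegral_mul_const _ hPv, lintegral_add_left_eq_self]
      simp_rw [this]
      rw [lintegral_const_mul _ knW_meas]
      ring

theorem kn_M2_le {p : ℝ≥0∞} (hp1 : 1 ≤ p) (hp2 : p ≤ 2) :
    ∃ C : ℝ≥0∞, C ≠ ∞ ∧ ∀ (F : EuclideanSpace ℝ ι → ℂ), Integrable F →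
    ∫⁻ ω, (∫⁻ x, ‖STFT F x ω‖ₑ ^ (2:ℝ)) ^ (1/2 : ℝ) ≤ C * modNorm p 1 F := by
  obtain ⟨C, hC, hrep⟩ := kn_repro (ι := ι)
  obtain ⟨C', hC', h⟩ := kn_M2_abs (ι := ι) hp1 hp2 hC
  refine ⟨C', hC', fun F hF => ?_⟩
  exact h (fun x ω => ‖STFT F x ω‖ₑ) (kn_stft_cont hF).measurable.enorm (hrep F hF)

end knRepro


open MeasureTheory SchwartzMap Complex ENNReal NNReal
open scoped FourierTransform Convolution

section knAbs
variable {ι : Type*} [Fintype ι]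

local notation "EE" => EuclideanSpace ℝ ι

theorem kn_absA {F : EE → EE → EE → ℝ≥0∞}
    (hF : Measurable fun q : EE × EE × EE => F q.1 q.2.1 q.2.2)
    {g : EE → ℝ≥0∞} (hg : Measurable g) (hg1 : ∀ t, g t ≤ 1) {κ : EE → EE → ℝ≥0∞}
    (h : ∀ u z x, κ u z * g (u - x) ≤ ∫⁻ ξ, F z x ξ) (u z : EE) :
    (∫⁻ t, g t ^ (2:ℝ)) * κ u z ≤
      (∫⁻ t, g t) ^ (1 / 2 : ℝ) * ∫⁻ ξ, (∫⁻ x, F z x ξ ^ (2:ℝ)) ^ (1 / 2 : ℝ) := by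
  have hFz : Measurable fun q : EE × EE => F z q.1 q.2 :=
    hF.comp (by fun_prop : Measurable fun q : EE × EE => (z, q.1, q.2))
  have hFx : ∀ ξ, Measurable fun x => F z x ξ := fun ξ =>
    hFz.comp (by fun_prop : Measurable fun x : EE => (x, ξ))
  have hFξ : ∀ x, Measurable fun ξ => F z x ξ := fun x =>
    hFz.comp (by fun_prop : Measurable fun ξ : EE => (x, ξ))
  have hgu : Measurable fun x => g (u - x) := hg.comp (by fun_prop)
  have e0 : ∫⁻ t, g t ^ (2:ℝ) = ∫⁻ x, g (u - x) ^ (2:ℝ) :=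
    (lintegral_sub_left_eq_self (fun t => g t ^ (2:ℝ)) u).symm
  have hm : Measurable fun q : EE × EE => F z q.1 q.2 * g (u - q.1) :=
    hFz.mul (hgu.comp measurable_fst)
  calc _ = ∫⁻ x, κ u z * g (u - x) * g (u - x) := by
        rw [e0, mul_comm, ← lintegral_const_mul _ (hgu.pow_const _)]
        refine lintegral_congr fun x => ?_
        rw [ENNReal.rpow_two, pow_two, mul_assoc]
    _ ≤ ∫⁻ x, (∫⁻ ξ, F z x ξ) * g (u - x) := by
        refine lintegral_mono fun x => ?_
        have := h u z x
        gcongr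
    _ = ∫⁻ x, ∫⁻ ξ, F z x ξ * g (u - x) := by
        refine lintegral_congr fun x => ?_
        rw [lintegral_mul_const _ (hFξ x)]
    _ = ∫⁻ ξ, ∫⁻ x, F z x ξ * g (u - x) := lintegral_lintegral_swap hm.aemeasurable
    _ ≤ ∫⁻ ξ, (∫⁻ t, g t) ^ (1 / 2 : ℝ) * (∫⁻ x, F z x ξ ^ (2:ℝ)) ^ (1 / 2 : ℝ) := by
        refine lintegral_mono fun ξ => ?_
        refine (kn_jensen (hFx ξ).aemeasurable hgu.aemeasurable (p := 2) (by norm_num)).trans ?_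
        rw [lintegral_sub_left_eq_self g u]
        have : (1 - 1 / 2 : ℝ) = 1 / 2 := by norm_num
        rw [this]
        gcongr with x
        exact mul_le_of_le_one_right zero_le (hg1 _)
    _ = _ := by
        rw [lintegral_const_mul]
        refine Measurable.pow_const ?_ _
        exact Measurable.lintegral_prod_left' (f := fun q : EE × EE => F z q.1 q.2 ^ (2:ℝ)) (hFz.pow_const _)

theorem kn_absB {F : EE → EE → ℝ≥0∞}
    (hF : Measurable fun q : EE × EE => F q.1 q.2)
    {g : EE → ℝ≥0∞} (hg : Measurable g) :
    (∫⁻ t, g t ^ (2:ℝ)) * ∫⁻ z, (∫⁻ x, F z x ^ (2:ℝ)) ^ (1 / 2 : ℝ) ≤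
      (∫⁻ t, g t ^ (2:ℝ)) ^ (1 / 2 : ℝ) *
        ∫⁻ η, (∫⁻ x, ∫⁻ ζ, F (ζ + η) x ^ (2:ℝ) * g ζ ^ (2:ℝ)) ^ (1 / 2 : ℝ) := by
  set N : EE → ℝ≥0∞ := fun z => (∫⁻ x, F z x ^ (2:ℝ)) ^ (1 / 2 : ℝ) with hN
  have hNm : Measurable N := by
    refine Measurable.pow_const ?_ _
    exact Measurable.lintegral_prod_right' (f := fun q : EE × EE => F q.1 q.2 ^ (2:ℝ)) (hF.pow_const _)
  have hN2 : ∀ z, N z ^ (2:ℝ) = ∫⁻ x, F z x ^ (2:ℝ) := by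
    intro z
    simp only [hN]
    rw [← ENNReal.rpow_mul]; norm_num
  have hg2 : Measurable fun t => g t ^ (2:ℝ) := hg.pow_const _
  have hm : Measurable fun q : EE × EE => N (q.1 + q.2) * g q.1 ^ (2:ℝ) :=
    (hNm.comp (by fun_prop)).mul (hg2.comp measurable_fst)
  have hNη : ∀ η, Measurable fun ζ => N (ζ + η) := fun η => hNm.comp (by fun_prop : Measurable fun ζ : EE => ζ + η)
  have hNζ : ∀ ζ, Measurable fun η => N (ζ + η) := fun ζ => hNm.comp (by fun_prop : Measurable fun η : EE => ζ + η)
  calc (∫⁻ t, g t ^ (2:ℝ)) * ∫⁻ z, N z = ∫⁻ ζ, ∫⁻ η, N (ζ + η) * g ζ ^ (2:ℝ) := by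
        rw [mul_comm, ← lintegral_const_mul _ hg2]
        refine lintegral_congr fun ζ => ?_
        rw [lintegral_mul_const _ (hNζ ζ), lintegral_add_left_eq_self]
    _ = ∫⁻ η, ∫⁻ ζ, N (ζ + η) * g ζ ^ (2:ℝ) := lintegral_lintegral_swap hm.aemeasurable
    _ ≤ ∫⁻ η, (∫⁻ t, g t ^ (2:ℝ)) ^ (1 / 2 : ℝ) * (∫⁻ x, ∫⁻ ζ, F (ζ + η) x ^ (2:ℝ) * g ζ ^ (2:ℝ)) ^ (1 / 2 : ℝ) := by
        refine lintegral_mono fun η => ?_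
        refine (kn_jensen (hNη η).aemeasurable hg2.aemeasurable (p := 2) (by norm_num)).trans (le_of_eq ?_)
        have : (1 - 1 / 2 : ℝ) = 1 / 2 := by norm_num
        rw [this]
        congr 2
        have hm2 : Measurable fun q : EE × EE => F (q.1 + η) q.2 ^ (2:ℝ) * g q.1 ^ (2:ℝ) := by
          refine Measurable.mul (Measurable.pow_const ?_ _) (hg2.comp measurable_fst)
          exact hF.comp (by fun_prop : Measurable fun q : EE × EE => (q.1 + η, q.2))
        rw [← lintegral_lintegral_swap hm2.aemeasurable]
        refine lintegral_congr fun ζ => ?_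
        rw [hN2, lintegral_mul_const]
        refine Measurable.pow_const ?_ _
        exact hF.comp (by fun_prop : Measurable fun x : EE => (ζ + η, x))
    _ = _ := by
        rw [lintegral_const_mul]
        refine Measurable.pow_const ?_ _
        have hm3 : Measurable fun q : (EE × EE) × EE => F (q.2 + q.1.1) q.1.2 ^ (2:ℝ) * g q.2 ^ (2:ℝ) := by
          refine Measurable.mul (Measurable.pow_const ?_ _) (hg2.comp measurable_snd)
          exact hF.comp (by fun_prop : Measurable fun q : (EE × EE) × EE => (q.2 + q.1.1, q.1.2))
        exact Measurable.lintegral_prod_right' (f := fun q : EE × EE => ∫⁻ ζ, F (ζ + q.1) q.2 ^ (2:ℝ) * g ζ ^ (2:ℝ)) hm3.lintegral_prod_right'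

theorem kn_absC {F : EE → EE → EE → ℝ≥0∞}
    (hF : Measurable fun q : EE × EE × EE => F q.1 q.2.1 q.2.2)
    {g : EE → ℝ≥0∞} (hg : Measurable g) {κ : EE → EE → ℝ≥0∞} {c c₂ : ℝ≥0∞}
    (hc : c₂ = ∫⁻ t, g t ^ (2:ℝ)) (h0 : c₂ ≠ 0) (ht : c₂ ≠ ∞)
    (h : ∀ u z, c₂ * κ u z ≤ c * ∫⁻ ξ, (∫⁻ x, F z x ξ ^ (2:ℝ)) ^ (1 / 2 : ℝ)) :
    ∃ H : EE → ℝ≥0∞, Measurable H ∧ (∀ u z, κ u z ≤ H z) ∧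
      ∫⁻ z, H z ≤ c₂⁻¹ * c * (c₂⁻¹ * c₂ ^ (1 / 2 : ℝ)) *
        ∫⁻ ξ, ∫⁻ η, (∫⁻ x, ∫⁻ ζ, F (ζ + η) x ξ ^ (2:ℝ) * g ζ ^ (2:ℝ)) ^ (1 / 2 : ℝ) := by
  have hN : Measurable fun q : EE × EE => (∫⁻ x, F q.1 x q.2 ^ (2:ℝ)) ^ (1 / 2 : ℝ) := by
    refine Measurable.pow_const ?_ _
    have hm : Measurable fun q : (EE × EE) × EE => F q.1.1 q.2 q.1.2 ^ (2:ℝ) := by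
      refine Measurable.pow_const ?_ _
      exact hF.comp (by fun_prop : Measurable fun q : (EE × EE) × EE => (q.1.1, q.2, q.1.2))
    exact hm.lintegral_prod_right'
  have hNi : Measurable fun z : EE => ∫⁻ ξ, (∫⁻ x, F z x ξ ^ (2:ℝ)) ^ (1 / 2 : ℝ) :=
    Measurable.lintegral_prod_right' (f := fun q : EE × EE => (∫⁻ x, F q.1 x q.2 ^ (2:ℝ)) ^ (1 / 2 : ℝ)) hN
  have hinv : ∀ {a b : ℝ≥0∞}, c₂ * a ≤ b → a ≤ c₂⁻¹ * b := by
    intro a b hab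
    calc a = c₂⁻¹ * (c₂ * a) := by rw [← mul_assoc, ENNReal.inv_mul_cancel h0 ht, one_mul]
      _ ≤ _ := by gcongr
  refine ⟨fun z => c₂⁻¹ * c * ∫⁻ ξ, (∫⁻ x, F z x ξ ^ (2:ℝ)) ^ (1 / 2 : ℝ), hNi.const_mul _, ?_, ?_⟩
  · intro u z
    beta_reduce
    rw [mul_assoc]
    exact hinv (h u z)
  · rw [lintegral_const_mul _ hNi, lintegral_lintegral_swap hN.aemeasurable, mul_assoc (c₂⁻¹ * c)]
    gcongr
    rw [← lintegral_const_mul']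
    swap
    · exact ENNReal.mul_ne_top (ENNReal.inv_ne_top.2 h0) (ENNReal.rpow_ne_top_of_nonneg (by norm_num) ht)
    refine lintegral_mono fun ξ => ?_
    rw [mul_assoc]
    refine hinv ?_
    rw [hc]
    exact kn_absB (F := fun z x => F z x ξ)
      (hF.comp (by fun_prop : Measurable fun q : EE × EE => (q.1, q.2, ξ))) hg

theorem kn_gauss_l1 : ∫⁻ t : EE, ‖gaussWin t‖ₑ ≠ ∞ := kn_gauss_integrable.2.ne

theorem kn_gauss_l2 : ∫⁻ t : EE, ‖gaussWin t‖ₑ ^ (2:ℝ) ≠ ∞ := by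
  refine ne_top_of_le_ne_top kn_gauss_l1 (lintegral_mono fun t => ?_)
  rw [ENNReal.rpow_two, pow_two]
  exact mul_le_of_le_one_right zero_le (kn_gauss_enorm_le t)

theorem kn_gauss_l2_pos : ∫⁻ t : EE, ‖gaussWin t‖ₑ ^ (2:ℝ) ≠ 0 := by
  intro h
  rw [lintegral_eq_zero_iff (kn_gauss_cont.measurable.enorm.pow_const _)] at h
  obtain ⟨t, ht⟩ := h.exists
  simp [gaussWin] at ht

end knAbs

section knKer
variable {ι : Type*} [Fintype ι]

local notation "EE" => EuclideanSpace ℝ ι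

/-- character -/
noncomputable def knE (ξ t : EE) : ℂ := (Real.fourierChar (-inner ℝ t ξ) : ℂ)

theorem knE_norm (ξ t : EE) : ‖knE ξ t‖ = 1 := by
  rw [knE]; exact Circle.norm_coe _

theorem knE_cont : Continuous fun q : EE × EE => knE q.1 q.2 := by
  unfold knE; fun_prop

theorem knE_cont_right (ξ : EE) : Continuous (knE ξ) := by
  unfold knE; fun_prop

theorem knE_fourier (f : EE → ℂ) (w : EE) : 𝓕 f w = ∫ t, knE w t * f t := by
  rw [Real.fourier_eq]; rfl

theorem knE_stft (F : EE → ℂ) (x w : EE) : STFT F x w = ∫ t, knE w t * gaussWin (t - x) * F t := by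
  rw [kn_stft_eq, knE_fourier]
  congr 1; ext t; ring

/-- bounded weights -/
def knBd (c : EE → ℂ) : Prop := Continuous c ∧ ∀ t, ‖c t‖ ≤ 1

theorem knBd_E (ξ : EE) : knBd (knE ξ) := ⟨knE_cont_right ξ, fun t => (knE_norm ξ t).le⟩

theorem knBd_EG (ξ x : EE) : knBd (fun t => knE ξ t * gaussWin (t - x)) := by
  refine ⟨(knE_cont_right ξ).mul (kn_gauss_cont.comp (by fun_prop)), fun t => ?_⟩
  rw [norm_mul, knE_norm, one_mul]; exact kn_gauss_norm_le _

theorem kn_T_int {α : EE × EE → ℂ} (hα : Integrable α) {c₁ c₂ : EE → ℂ} (h₁ : knBd c₁) (h₂ : knBd c₂) :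
    Integrable (fun q : EE × EE => c₁ q.1 * c₂ q.2 * α q) := by
  refine hα.bdd_mul (c := 1) ?_ ?_
  · exact ((h₁.1.comp continuous_fst).mul (h₂.1.comp continuous_snd)).aestronglyMeasurable
  · refine Filter.Eventually.of_forall fun q => ?_
    rw [norm_mul]
    exact mul_le_one₀ (h₁.2 _) (norm_nonneg _) (h₂.2 _)

theorem kn_T_left {α : EE × EE → ℂ} (hα : Integrable α) {c₁ c₂ : EE → ℂ} (h₁ : knBd c₁) (h₂ : knBd c₂) :
    ∫ q : EE × EE, c₁ q.1 * c₂ q.2 * α q = ∫ t, c₁ t * ∫ s, c₂ s * α (t, s) := by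
  rw [Measure.volume_eq_prod, integral_prod _ (kn_T_int hα h₁ h₂)]
  congr 1; ext t
  rw [← integral_const_mul]
  congr 1; ext s; ring

theorem kn_T_right {α : EE × EE → ℂ} (hα : Integrable α) {c₁ c₂ : EE → ℂ} (h₁ : knBd c₁) (h₂ : knBd c₂) :
    ∫ q : EE × EE, c₁ q.1 * c₂ q.2 * α q = ∫ s, c₂ s * ∫ t, c₁ t * α (t, s) := by
  rw [Measure.volume_eq_prod, integral_prod_symm _ (kn_T_int hα h₁ h₂)]
  congr 1; ext s
  rw [← integral_const_mul]
  congr 1; ext t; ring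

/-- the time-frequency transform of the kernel -/
noncomputable def knK (α : EE × EE → ℂ) (z x ξ : EE) : ℂ :=
  ∫ q : EE × EE, (knE ξ q.1 * gaussWin (q.1 - x)) * knE z q.2 * α q

theorem knK_eq1 {α : EE × EE → ℂ} (hα : Integrable α) (z x ξ : EE) :
    knK α z x ξ = STFT (fun u => 𝓕 (fun w => α (u, w)) z) x ξ := by
  rw [knK, kn_T_left hα (knBd_EG ξ x) (knBd_E z), knE_stft]
  simp_rw [knE_fourier]

theorem knK_eq2 {α : EE × EE → ℂ} (hα : Integrable α) (z x ξ : EE) :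
    knK α z x ξ = 𝓕 (fun w => STFT (fun u => α (u, w)) x ξ) z := by
  rw [knK, kn_T_right hα (knBd_EG ξ x) (knBd_E z), knE_fourier]
  simp_rw [knE_stft]

theorem knK_cont {α : EE × EE → ℂ} (hα : Integrable α) :
    Continuous fun q : EE × EE × EE => knK α q.1 q.2.1 q.2.2 := by
  unfold knK
  refine continuous_of_dominated (bound := fun t => ‖α t‖) ?_ ?_ hα.norm ?_
  · intro q
    exact (kn_T_int hα (knBd_EG _ _) (knBd_E _)).1
  · intro q
    filter_upwards with t
    rw [norm_mul]
    refine mul_le_of_le_one_left (norm_nonneg _) ?_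
    rw [norm_mul]
    exact mul_le_one₀ ((knBd_EG _ _).2 _) (norm_nonneg _) ((knBd_E _).2 _)
  · filter_upwards with t
    have h1 := kn_gauss_cont (ι := ι)
    have h2 := knE_cont (ι := ι)
    generalize (gaussWin : EE → ℂ) = G at h1 ⊢
    generalize (knE : EE → EE → ℂ) = e at h2 ⊢
    refine Continuous.mul (Continuous.mul (Continuous.mul ?_ ?_) ?_) continuous_const
    · exact h2.comp (by fun_prop : Continuous fun q : EE × EE × EE => (q.2.2, t.1))
    · exact h1.comp (by fun_prop : Continuous fun q : EE × EE × EE => t.1 - q.2.1)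
    · exact h2.comp (by fun_prop : Continuous fun q : EE × EE × EE => (q.1, t.2))

theorem kn_A_int {α : EE × EE → ℂ} (hα : Integrable α) (x ξ : EE) :
    Integrable (fun w => STFT (fun u => α (u, w)) x ξ) := by
  have h := kn_T_int hα (knBd_EG ξ x) (c₂ := fun _ => 1) ⟨continuous_const, by simp⟩
  rw [Measure.volume_eq_prod] at h
  refine h.integral_prod_right.congr (Filter.Eventually.of_forall fun w => ?_)
  simp only [knE_stft, mul_one]

theorem kn_k_int {α : EE × EE → ℂ} (hα : Integrable α) (z : EE) :
    Integrable (fun u => 𝓕 (fun w => α (u, w)) z) := by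
  have h := kn_T_int hα (c₁ := fun _ => 1) ⟨continuous_const, by simp⟩ (knBd_E z)
  rw [Measure.volume_eq_prod] at h
  refine h.integral_prod_left.congr (Filter.Eventually.of_forall fun w => ?_)
  simp only [knE_fourier, one_mul]

theorem kn_k_cont {α : EE × EE → ℂ} (hc : Continuous α) {g : EE → ℝ} (hg : Integrable g)
    (hb : ∀ u w, ‖α (u, w)‖ ≤ g w) (z : EE) :
    Continuous (fun u => 𝓕 (fun w => α (u, w)) z) := by
  simp_rw [knE_fourier]
  refine continuous_of_dominated (bound := g) ?_ ?_ hg ?_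
  · intro u
    exact ((knE_cont_right z).mul (hc.comp (by fun_prop : Continuous fun w => (u, w)))).aestronglyMeasurable
  · intro u
    filter_upwards with w
    rw [norm_mul, knE_norm, one_mul]; exact hb u w
  · filter_upwards with w
    exact continuous_const.mul (hc.comp (by fun_prop : Continuous fun u => (u, w)))

theorem kn_ptwise {α : EE × EE → ℂ} (hα : Integrable α) (hc : Continuous α) {g : EE → ℝ} (hg : Integrable g)
    (hb : ∀ u w, ‖α (u, w)‖ ≤ g w) (u z x : EE) :
    ‖𝓕 (fun w => α (u, w)) z‖ₑ * ‖gaussWin (u - x)‖ₑ ≤ ∫⁻ ξ, ‖knK α z x ξ‖ₑ := by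
  simp_rw [knK_eq1 hα]
  have h1 := kn_k_cont hc hg hb z
  have h2 := kn_k_int hα z
  have h3 : Continuous (fun t : EE => 𝓕 (fun w => α (t, w)) z * gaussWin (t - x)) :=
    h1.mul (kn_gauss_cont.comp (continuous_sub_right x))
  have h := kn_inv_bound h3 (kn_mul_gauss_integrable h2 x) u
  rw [enorm_mul] at h
  refine h.trans (le_of_eq ?_)
  rw [kn_stft_eq]

theorem kn_H : ∃ C : ℝ≥0∞, C ≠ ∞ ∧ ∀ (α : EE × EE → ℂ), Integrable α → Continuous α →
    ∀ g : EE → ℝ, Integrable g → (∀ u w, ‖α (u, w)‖ ≤ g w) →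
    ∃ H : EE → ℝ≥0∞, Measurable H ∧ (∀ u z, ‖𝓕 (fun w => α (u, w)) z‖ₑ ≤ H z) ∧
      ∫⁻ z, H z ≤ C * ∫⁻ ξ, ∫⁻ η, (∫⁻ x, ∫⁻ y,
        ‖STFT (fun w => STFT (fun u => α (u, w)) x ξ) y η‖ₑ ^ (2:ℝ)) ^ (1 / 2 : ℝ) := by
  set c₁ : ℝ≥0∞ := ∫⁻ t : EE, ‖gaussWin t‖ₑ with hc₁
  set c₂ : ℝ≥0∞ := ∫⁻ t : EE, ‖gaussWin t‖ₑ ^ (2:ℝ) with hc₂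
  have h1 : c₁ ≠ ∞ := kn_gauss_l1
  have h2 : c₂ ≠ ∞ := kn_gauss_l2
  have h20 : c₂ ≠ 0 := kn_gauss_l2_pos
  have hi : c₂⁻¹ ≠ ∞ := ENNReal.inv_ne_top.2 h20
  refine ⟨c₂⁻¹ * c₁ ^ (1 / 2 : ℝ) * (c₂⁻¹ * c₂ ^ (1 / 2 : ℝ)), ?_, ?_⟩
  · refine ENNReal.mul_ne_top (ENNReal.mul_ne_top hi ?_) (ENNReal.mul_ne_top hi ?_)
    · exact ENNReal.rpow_ne_top_of_nonneg (by norm_num) h1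
    · exact ENNReal.rpow_ne_top_of_nonneg (by norm_num) h2
  intro α hα hc g hg hb
  have hF : Measurable fun q : EE × EE × EE => ‖knK α q.1 q.2.1 q.2.2‖ₑ := (knK_cont hα).measurable.enorm
  have hG : Measurable fun t : EE => ‖gaussWin t‖ₑ := kn_gauss_cont.measurable.enorm
  have hA := kn_absA (F := fun z x ξ => ‖knK α z x ξ‖ₑ) hF hG kn_gauss_enorm_le
    (κ := fun u z => ‖𝓕 (fun w => α (u, w)) z‖ₑ) (kn_ptwise hα hc hg hb)
  have hP : ∀ ξ η x, ∫⁻ ζ, ‖knK α (ζ + η) x ξ‖ₑ ^ (2:ℝ) * ‖gaussWin ζ‖ₑ ^ (2:ℝ) =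
      ∫⁻ y, ‖STFT (fun w => STFT (fun u => α (u, w)) x ξ) y η‖ₑ ^ (2:ℝ) := by
    intro ξ η x
    simp_rw [knK_eq2 hα]
    exact kn_stft_plancherel (kn_A_int hα x ξ) η
  simp_rw [← hP]
  exact kn_absC (F := fun z x ξ => ‖knK α z x ξ‖ₑ) hF hG hc₂ h20 h2 hA

end knKer


open MeasureTheory SchwartzMap Complex ENNReal NNReal
open scoped FourierTransform Convolution

section knFinal
variable {d : ℕ}

local notation "ED" => EuclideanSpace ℝ (Fin d)
local notation "ED2" => EuclideanSpace ℝ (Fin d ⊕ Fin d)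

/-- the pairing as a measurable equivalence -/
noncomputable def knPair : (ED × ED) ≃ᵐ ED2 :=
  ((MeasurableEquiv.toLp 2 (Fin d → ℝ)).symm.prodCongr (MeasurableEquiv.toLp 2 (Fin d → ℝ)).symm).trans
    ((MeasurableEquiv.sumPiEquivProdPi (fun _ : Fin d ⊕ Fin d => ℝ)).symm.trans
      (MeasurableEquiv.toLp 2 (Fin d ⊕ Fin d → ℝ)))

theorem knPair_apply (q : ED × ED) : knPair q = pairE q.1 q.2 := by
  ext i
  cases i <;> rfl

theorem knPair_mp : MeasurePreserving (knPair : ED × ED → ED2) := by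
  have h1 := (PiLp.volume_preserving_ofLp (Fin d)).prod (PiLp.volume_preserving_ofLp (Fin d))
  have h2 := volume_measurePreserving_sumPiEquivProdPi_symm (fun _ : Fin d ⊕ Fin d => ℝ)
  have h3 := PiLp.volume_preserving_toLp (Fin d ⊕ Fin d)
  exact h3.comp (h2.comp h1)

theorem knPair_mp' : MeasurePreserving (fun q : ED × ED => pairE q.1 q.2) := by
  have := knPair_mp (d := d)
  rwa [show (knPair : ED × ED → ED2) = fun q => pairE q.1 q.2 from funext knPair_apply] at this

theorem knPair_me : MeasurableEmbedding (fun q : ED × ED => pairE q.1 q.2) := by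
  have := (knPair (d := d)).measurableEmbedding
  rwa [show (knPair : ED × ED → ED2) = fun q => pairE q.1 q.2 from funext knPair_apply] at this

theorem knPair_cont : Continuous (fun q : ED × ED => pairE q.1 q.2) := by
  unfold pairE
  refine (PiLp.continuous_toLp 2 _).comp (continuous_pi fun i => ?_)
  cases i
  · simp only [Sum.elim_inl]; fun_prop
  · simp only [Sum.elim_inr]; fun_prop

theorem knPair_inner (x y ξ η : ED) :
    inner ℝ (pairE x y) (pairE ξ η) = inner ℝ x ξ + inner ℝ y η := by
  simp [pairE, PiLp.inner_apply, Fintype.sum_sum_type]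

theorem knPair_sub (x y ξ η : ED) : pairE x y - pairE ξ η = pairE (x - ξ) (y - η) := by
  ext i; cases i <;> simp [pairE]

theorem knPair_normsq (x y : ED) : ‖pairE x y‖ ^ 2 = ‖x‖ ^ 2 + ‖y‖ ^ 2 := by
  rw [← real_inner_self_eq_norm_sq, knPair_inner, real_inner_self_eq_norm_sq, real_inner_self_eq_norm_sq]

theorem knPair_norm_ge (x y : ED) : ‖y‖ ≤ ‖pairE x y‖ := by
  refine le_of_sq_le_sq ?_ (norm_nonneg _)
  rw [knPair_normsq]; nlinarith [sq_nonneg ‖x‖]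

theorem knPair_gauss (x y : ED) : gaussWin (pairE x y) = gaussWin x * gaussWin y := by
  rw [kn_gauss_real, kn_gauss_real, kn_gauss_real, knPair_normsq, ← Complex.ofReal_mul, ← Real.exp_add]
  congr 2; ring

theorem knPair_E (ξ η x y : ED) : knE (pairE ξ η) (pairE x y) = knE ξ x * knE η y := by
  rw [knE, knE, knE, knPair_inner, neg_add, AddChar.map_add_eq_mul, Circle.coe_mul]

theorem knPair_int {a : ED2 → ℂ} (ha : Integrable a) :
    Integrable (fun q : ED × ED => a (pairE q.1 q.2)) :=
  (knPair_mp'.integrable_comp_emb knPair_me).2 ha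

theorem knPair_stft {a : ED2 → ℂ} (ha : Integrable a) (x y ξ η : ED) :
    STFT a (pairE x y) (pairE ξ η) = STFT (fun w => STFT (fun u => a (pairE u w)) x ξ) y η := by
  have h := kn_T_right (knPair_int ha) (knBd_EG ξ x) (knBd_EG η y)
  rw [knE_stft, ← knPair_mp'.integral_comp knPair_me]
  simp_rw [knE_stft]
  rw [← h]
  congr 1; ext q
  rw [knPair_sub, knPair_gauss, knPair_E]
  ring

theorem knPair_lint {φ : ED2 → ℝ≥0∞} (hφ : Measurable φ) :
    ∫⁻ ω, φ ω = ∫⁻ ξ, ∫⁻ η, φ (pairE ξ η) := by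
  rw [← knPair_mp'.lintegral_comp hφ, Measure.volume_eq_prod, lintegral_prod]
  exact (hφ.comp knPair_cont.measurable).aemeasurable

theorem knPair_norm {a : ED2 → ℂ} (ha : Integrable a) :
    ∫⁻ ω, (∫⁻ x, ‖STFT a x ω‖ₑ ^ (2:ℝ)) ^ (1 / 2 : ℝ) =
      ∫⁻ ξ, ∫⁻ η, (∫⁻ x, ∫⁻ y,
        ‖STFT (fun w => STFT (fun u => a (pairE u w)) x ξ) y η‖ₑ ^ (2:ℝ)) ^ (1 / 2 : ℝ) := by
  have hV : Measurable fun q : ED2 × ED2 => ‖STFT a q.1 q.2‖ₑ := (kn_stft_cont ha).measurable.enorm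
  simp_rw [← knPair_stft ha]
  generalize STFT a = S at hV ⊢
  have h1 : Measurable fun q : ED2 × ED2 => ‖S q.1 q.2‖ₑ ^ (2:ℝ) := hV.pow_const _
  rw [knPair_lint]
  · refine lintegral_congr fun ξ => lintegral_congr fun η => ?_
    rw [knPair_lint]
    exact h1.comp (by fun_prop : Measurable fun x : ED2 => (x, pairE ξ η))
  · refine Measurable.pow_const ?_ _
    exact h1.lintegral_prod_left'

theorem kn_schwartz_bound (a : SchwartzMap ED2 ℂ) : ∃ g : ED → ℝ, Integrable g ∧
    ∀ u w, ‖a (pairE u w)‖ ≤ g w := by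
  set k := Module.finrank ℝ ED + 1 with hk
  set M := 2 ^ k * (Finset.Iic (k, 0)).sup (fun m => SchwartzMap.seminorm ℝ m.1 m.2) a with hM
  refine ⟨fun w => M * (1 + ‖w‖) ^ (-(k:ℝ)), ?_, ?_⟩
  · refine Integrable.const_mul ?_ _
    exact integrable_one_add_norm (by rw [hk]; push_cast; linarith)
  · intro u w
    have h := SchwartzMap.one_add_le_sup_seminorm_apply (𝕜 := ℝ) (m := (k, 0)) (le_refl k) (le_refl 0) a (pairE u w)
    rw [norm_iteratedFDeriv_zero] at h
    have hp : 0 < 1 + ‖w‖ := by positivity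
    beta_reduce
    rw [Real.rpow_neg hp.le, Real.rpow_natCast, ← div_eq_mul_inv, le_div_iff₀ (by positivity), mul_comm]
    refine le_trans ?_ h
    gcongr
    exact knPair_norm_ge u w

theorem kn_op_bound {a : ED2 → ℂ} {f : ED → ℂ} (hf : Integrable f) (x : ED)
    (ha : Integrable fun w => a (pairE x w)) {H : ED → ℝ≥0∞}
    (hH : ∀ z, ‖𝓕 (fun w => a (pairE x w)) z‖ₑ ≤ H z) :
    ‖KNop a f x‖ₑ ≤ ∫⁻ z, H z * ‖f (x + z)‖ₑ := by
  have hφ : Integrable fun w => Real.fourierChar (-inner ℝ w (-x)) • a (pairE x w) :=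
    (Real.fourierIntegral_convergent_iff (-x)).2 ha
  have h := kn_flip hφ hf
  have e : KNop a f x = ∫ w, (Real.fourierChar (-inner ℝ w (-x)) • a (pairE x w)) * 𝓕 f w := by
    rw [KNop, kn_fTrans_eq]
    congr 1; ext w
    rw [Circle.smul_def, smul_eq_mul, Real.fourierChar_apply, inner_neg_right, neg_neg, real_inner_comm]
    have : cexp (Complex.I * (2 * Real.pi * (inner ℝ w x : ℝ))) = cexp (((2 * Real.pi * inner ℝ w x : ℝ) : ℂ) * Complex.I) := by
      congr 1; push_cast; ring
    rw [this]; ring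
  rw [e, ← h]
  refine (enorm_integral_le_lintegral_enorm _).trans ?_
  rw [← lintegral_add_left_eq_self _ x]
  refine lintegral_mono fun z => ?_
  rw [enorm_mul, kn_fourier_mod]
  have : x + z + -x = z := by abel
  rw [this]
  gcongr
  exact hH z

theorem kn_main (d : ℕ) (p r s : ℝ≥0∞)
    (hp1 : 1 ≤ p) (hp2 : p ≤ 2) (hr : 1 ≤ r) (hs : 1 ≤ s) :
    ∃ C : ℝ, 0 < C ∧
      ∀ (a : SchwartzMap (EuclideanSpace ℝ (Fin d ⊕ Fin d)) ℂ)
        (f : SchwartzMap (EuclideanSpace ℝ (Fin d)) ℂ),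
        wNorm d r s (KNop ⇑a ⇑f) ≤
          ENNReal.ofReal C * modNorm p 1 ⇑a * wNorm d r s ⇑f := by
  obtain ⟨C₁, hC₁, h₁⟩ := kn_H (ι := Fin d)
  obtain ⟨C₂, hC₂, h₂⟩ := kn_M2_le (ι := Fin d ⊕ Fin d) hp1 hp2
  have hD : 2 ^ d * (C₁ * C₂) ≠ ∞ :=
    ENNReal.mul_ne_top (by simp) (ENNReal.mul_ne_top hC₁ hC₂)
  refine ⟨(2 ^ d * (C₁ * C₂)).toReal + 1, by positivity, fun a f => ?_⟩
  have hai : Integrable (⇑a) := a.integrable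
  have hpc := knPair_cont (d := d)
  obtain ⟨g, hg, hb⟩ := kn_schwartz_bound a
  obtain ⟨H, hHm, hHk, hHi⟩ := h₁ (fun q => a (pairE q.1 q.2)) (knPair_int hai)
    (a.continuous.comp hpc) g hg hb
  have hH2 : ∫⁻ z, H z ≤ C₁ * (C₂ * modNorm p 1 ⇑a) := by
    refine hHi.trans ?_
    rw [← knPair_norm hai]
    gcongr
    exact h₂ _ hai
  have hop : ∀ x, (‖KNop ⇑a ⇑f x‖₊ : ℝ≥0∞) ≤ ∫⁻ z, H z * (‖f (x + z)‖₊ : ℝ≥0∞) := by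
    intro x
    refine kn_op_bound f.integrable x ?_ (fun z => hHk x z)
    refine hg.mono' ?_ (Filter.Eventually.of_forall fun w => hb x w)
    exact (a.continuous.comp (hpc.comp (Continuous.prodMk_right x))).aestronglyMeasurable
  refine (kn_amalgam hr hs hHm f.continuous hop).trans ?_
  refine mul_le_mul' ?_ le_rfl
  calc 2 ^ d * ∫⁻ z, H z ≤ 2 ^ d * (C₁ * (C₂ * modNorm p 1 ⇑a)) := by gcongr
    _ = 2 ^ d * (C₁ * C₂) * modNorm p 1 ⇑a := by ring
    _ ≤ _ := by
      refine mul_le_mul' ?_ le_rfl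
      conv_lhs => rw [← ENNReal.ofReal_toReal hD]
      exact ENNReal.ofReal_le_ofReal (by simp)

end knFinal

/-- symbols in `M^{p,1}`, `1 ≤ p ≤ 2`, give operators bounded on
every Wiener amalgam space `W(L^r,L^s)`. -/
theorem kn_Mp1_bounded_on_amalgam (d : ℕ) (p r s : ℝ≥0∞)
    (hp1 : 1 ≤ p) (hp2 : p ≤ 2) (hr : 1 ≤ r) (hs : 1 ≤ s) :
    ∃ C : ℝ, 0 < C ∧
      ∀ (a : SchwartzMap (EuclideanSpace ℝ (Fin d ⊕ Fin d)) ℂ)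
        (f : SchwartzMap (EuclideanSpace ℝ (Fin d)) ℂ),
        wNorm d r s (KNop ⇑a ⇑f) ≤
          ENNReal.ofReal C * modNorm p 1 ⇑a * wNorm d r s ⇑f := by
  exact kn_main d p r s hp1 hp2 hr hs
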